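/- arXiv:1203.4032 — 8 statements merged into one kernel-verified Lean document; each statement's English description precedes it below -/
import Mathlib

section
/- Assume (as is proved elsewhere) that the weights β_nj satisfy the lower bound Σ_{n=1}^N k_n (𝔅̄^n V) V^n ≥ ρ_ν T^{ν-1} Σ_{n=1}^N k_n (V^n)^2 for every real sequence V = (V^1, ..., V^N). Let β̃_nj (1 ≤ j < n ≤ N) be real numbers with β̃_nn = β_nn, satisfying Σ_{j=1}^{n-1} |β̃_nj − β_nj| ≤ ρ_ν T^{ν-1} k_n for 2 ≤ n ≤ N, and Σ_{n=j+1}^N |β̃_nj − β_nj| ≤ ρ_ν T^{ν-1} k_j for 1 ≤ j ≤ N−1. Then Σ_{n=1}^N k_n (𝔅̃^n V) V^n ≥ 0 for every real sequence V, where 𝔅̃^n V = k_n^{-1}( β_nn V^n − Σ_{j=1}^{n-1} β̃_nj V^j ). -/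
/-!
The perturbed form differs from the original one by `-∑_{j<n} d_nj V^j V^n` with `d = β̃ - β`.
Young's inequality `|V^j V^n| ≤ ((V^j)² + (V^n)²) / 2` splits this triangular sum into two halves;
the row sums of `|d|` control the `(V^n)²` half and, after exchanging the order of summation, the
column sums control the `(V^j)²` half. Each half is at most `(C / 2) ∑ k_n (V^n)²` with
`C = ρ_ν T^{ν-1}` (`triangular_form_le`), so the lower bound for the original form absorbs the
perturbation. The first row and the last column of `d` are empty, so their bounds need `C ≥ 0`,
which holds because `sin (π ν / 2) ≥ 0` for `0 < ν < 1`.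
-/

open Real


/-- Schur test for a strictly lower triangular bilinear form: if its absolute row and column sums
are bounded by `w`, the form is bounded by the weighted square norm with weight `w`. -/
lemma triangular_form_le (N : ℕ) (w V : ℕ → ℝ) (d : ℕ → ℕ → ℝ)
    (hrow : ∀ n ∈ Finset.Icc 1 N, ∑ j ∈ Finset.Icc 1 (n - 1), |d n j| ≤ w n)
    (hcol : ∀ j ∈ Finset.Icc 1 N, ∑ n ∈ Finset.Icc (j + 1) N, |d n j| ≤ w j) :
    ∑ n ∈ Finset.Icc 1 N, ∑ j ∈ Finset.Icc 1 (n - 1), d n j * V j * V n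
      ≤ ∑ n ∈ Finset.Icc 1 N, w n * V n ^ 2 := by
  have hyoung : ∀ n j, d n j * V j * V n ≤ (|d n j| * V n ^ 2 + |d n j| * V j ^ 2) / 2 := by
    intro n j
    have h1 : d n j * (V j * V n) ≤ |d n j| * |V j * V n| :=
      (le_abs_self _).trans (abs_mul _ _).le
    have h2 : |V j * V n| ≤ (V n ^ 2 + V j ^ 2) / 2 := by
      rw [abs_le]
      constructor <;> nlinarith [sq_nonneg (V j + V n), sq_nonneg (V j - V n)]
    nlinarith [mul_le_mul_of_nonneg_left h2 (abs_nonneg (d n j))]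
  have hrows : ∑ n ∈ Finset.Icc 1 N, ∑ j ∈ Finset.Icc 1 (n - 1), |d n j| * V n ^ 2
      ≤ ∑ n ∈ Finset.Icc 1 N, w n * V n ^ 2 := by
    refine Finset.sum_le_sum fun n hn => ?_
    rw [← Finset.sum_mul]
    exact mul_le_mul_of_nonneg_right (hrow n hn) (sq_nonneg _)
  have hcols : ∑ n ∈ Finset.Icc 1 N, ∑ j ∈ Finset.Icc 1 (n - 1), |d n j| * V j ^ 2
      ≤ ∑ n ∈ Finset.Icc 1 N, w n * V n ^ 2 := by
    rw [Finset.sum_comm' (t' := Finset.Icc 1 N) (s' := fun j => Finset.Icc (j + 1) N)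
      (by intro n j; simp only [Finset.mem_Icc]; omega)]
    refine Finset.sum_le_sum fun j hj => ?_
    rw [← Finset.sum_mul]
    exact mul_le_mul_of_nonneg_right (hcol j hj) (sq_nonneg _)
  calc _ ≤ ∑ n ∈ Finset.Icc 1 N, ∑ j ∈ Finset.Icc 1 (n - 1),
          (|d n j| * V n ^ 2 + |d n j| * V j ^ 2) / 2 :=
        Finset.sum_le_sum fun n _ => Finset.sum_le_sum fun j _ => hyoung n j
    _ ≤ _ := by
        simp only [← Finset.sum_div, Finset.sum_add_distrib]
        linarith

/-- **Stability criterion for the perturbed weights (Corollary 2).**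
Given the lower bound `Σ k_n (𝔅̄^n V) V^n ≥ ρ_ν T^{ν-1} Σ k_n (V^n)²`, if the perturbed
weights `β̃` are close to the exact weights `β` in the sense of the two row/column sum
conditions, then `Σ k_n (𝔅̃^n V) V^n ≥ 0` for every real sequence `V`. -/
theorem perturbed_weights_positivity
    (T : ℝ) (hT : 0 < T) (N : ℕ) (hN : 1 ≤ N)
    (t : ℕ → ℝ) (ht0 : t 0 = 0) (htN : t N = T)
    (htmono : ∀ i, i < N → t i < t (i + 1))
    (ν : ℝ) (hν0 : 0 < ν) (hν1 : ν < 1)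
    (k : ℕ → ℝ) (hk : ∀ n, k n = t n - t (n - 1))
    (β : ℕ → ℕ → ℝ)
    (hβdiag : ∀ n, 1 ≤ n → n ≤ N → β n n = k n ^ ν / Real.Gamma (1 + ν))
    (hβ : ∀ j n, 1 ≤ j → j < n → n ≤ N →
      β n j = ∫ s in (t (j - 1))..(t j),
        ((t (n - 1) - s) ^ (ν - 1) - (t n - s) ^ (ν - 1)) / Real.Gamma ν)
    (ρ : ℝ)
    (hρ : ρ = π ^ (1 - ν) * ((1 - ν) ^ (1 - ν) / (2 - ν) ^ (2 - ν)) * Real.sin (π * ν / 2))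
    (hlower : ∀ V : ℕ → ℝ,
      ρ * T ^ (ν - 1) * ∑ n ∈ Finset.Icc 1 N, k n * (V n) ^ 2
        ≤ ∑ n ∈ Finset.Icc 1 N,
            k n * ((k n)⁻¹ * (β n n * V n - ∑ j ∈ Finset.Icc 1 (n - 1), β n j * V j)) * V n)
    (βt : ℕ → ℕ → ℝ)
    (hβtdiag : ∀ n, 1 ≤ n → n ≤ N → βt n n = β n n)
    (hrow : ∀ n, 2 ≤ n → n ≤ N →
      ∑ j ∈ Finset.Icc 1 (n - 1), |βt n j - β n j| ≤ ρ * T ^ (ν - 1) * k n)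
    (hcol : ∀ j, 1 ≤ j → j ≤ N - 1 →
      ∑ n ∈ Finset.Icc (j + 1) N, |βt n j - β n j| ≤ ρ * T ^ (ν - 1) * k j) :
    ∀ V : ℕ → ℝ,
      0 ≤ ∑ n ∈ Finset.Icc 1 N,
            k n * ((k n)⁻¹ * (β n n * V n - ∑ j ∈ Finset.Icc 1 (n - 1), βt n j * V j)) * V n := by
  intro V
  have hkpos : ∀ n ∈ Finset.Icc 1 N, 0 < k n := by
    intro n hn
    obtain ⟨h1, h2⟩ := Finset.mem_Icc.mp hn
    have h := htmono (n - 1) (by omega)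
    rw [Nat.sub_add_cancel h1] at h
    rw [hk]
    linarith
  have hC : 0 ≤ ρ * T ^ (ν - 1) := by
    have hsin : 0 ≤ Real.sin (π * ν / 2) :=
      Real.sin_nonneg_of_nonneg_of_le_pi (by positivity) (by nlinarith [Real.pi_pos])
    have h1 : 0 < 1 - ν := by linarith
    have h2 : 0 < 2 - ν := by linarith
    rw [hρ]
    positivity
  have hpert := triangular_form_le N (fun n => ρ * T ^ (ν - 1) * k n) V
    (fun n j => βt n j - β n j)
    (by
      intro n hn
      have hw := mul_nonneg hC (hkpos n hn).le
      obtain ⟨h1, h2⟩ := Finset.mem_Icc.mp hn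
      rcases h1.eq_or_lt with rfl | h1
      · simpa using hw
      · exact hrow n h1 h2)
    (by
      intro j hj
      have hw := mul_nonneg hC (hkpos j hj).le
      obtain ⟨h1, h2⟩ := Finset.mem_Icc.mp hj
      rcases h2.eq_or_lt with rfl | h2
      · simpa using hw
      · exact hcol j h1 (by omega))
  have hsplit : ∑ n ∈ Finset.Icc 1 N,
        k n * ((k n)⁻¹ * (β n n * V n - ∑ j ∈ Finset.Icc 1 (n - 1), βt n j * V j)) * V n
      = ∑ n ∈ Finset.Icc 1 N,
          k n * ((k n)⁻¹ * (β n n * V n - ∑ j ∈ Finset.Icc 1 (n - 1), β n j * V j)) * V n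
        - ∑ n ∈ Finset.Icc 1 N, ∑ j ∈ Finset.Icc 1 (n - 1),
            (βt n j - β n j) * V j * V n := by
    rw [← Finset.sum_sub_distrib]
    refine Finset.sum_congr rfl fun n hn => ?_
    have hne := (hkpos n hn).ne'
    rw [mul_inv_cancel_left₀ hne, mul_inv_cancel_left₀ hne, ← Finset.sum_mul]
    simp only [sub_mul, Finset.sum_sub_distrib]
    ring
  have hlow := hlower V
  simp only [Finset.mul_sum, ← mul_assoc] at hlow hpert
  simp only [← mul_assoc] at hsplit ⊢
  linarith
end

section
/- Let 0 < η ≤ 1, let r ≥ 1 be an integer, and suppose 0 ≤ a < b < c < d ≤ T with I_j ⊆ (a,b], I_n ⊆ (c,d] (where 1 ≤ j < n ≤ N) and (b−a)/(c−b) ≤ η. Let s̄ = (a+b)/2 and define φ_pn = (−1)^p B_{ν−p}(t_{n−1/2} − s̄, k_n), ψ_pj = B_p(t_{j−1/2} − s̄, k_j), and β̃_nj = Σ_{p=1}^r φ_pn ψ_pj. Then |β̃_nj − β_nj| ≤ 2^{2−ν} (r+1) (η/2)^r β_nj. -/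
/-!
Write `s̄` for the midpoint of `(a, b]`. The weight `β_nj` is the double integral, over `s ∈ I_j` and
`τ ∈ I_n`, of the positive kernel `-ω_{ν-1}(τ - s)`, and `β̃_nj` is the double integral of the Taylor
polynomial of this kernel in `s` at `s̄`, with `r` terms, because `ω_{μ+1}' = ω_μ` and
`ω_{1+p}'(s - s̄) = (s - s̄)^{p-1} / (p-1)!`. It is therefore enough to bound the Taylor remainder
pointwise by `K = 2^{2-ν} (r+1) (η/2)^r` times the kernel (`kernel_taylor_bound`).
The remainder is controlled by `|ω_{ν-1-r}| |s - s̄|^r / r!` at the smaller point `y` of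
`τ - s` and `τ - s̄`. The three factors of `K` come from `|s - s̄| / y ≤ η/2`, from
`|Γ(ν-1) / Γ(ν-1-r)| ≤ (r+1)!`, and from `τ - s ≤ 2 y`.

The integration in `τ` is replaced by a mean value inequality (`diff_abs_le_of_deriv`), so that only
the one-dimensional integral over `I_j` from the definition of the weights remains.
-/

open Real

/-- `ω_μ(t) = t^{μ-1}/Γ(μ)`. -/
noncomputable def omegaRL (μ x : ℝ) : ℝ := x ^ (μ - 1) / Real.Gamma μ

/-- `B_μ(t,k) = ω_{1+μ}(t + k/2) − ω_{1+μ}(t − k/2)`. -/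
noncomputable def Bfun (μ x k : ℝ) : ℝ :=
  omegaRL (1 + μ) (x + k / 2) - omegaRL (1 + μ) (x - k / 2)

lemma hasDerivAt_omegaRL (μ : ℝ) (hμ : μ ≠ 0) {x : ℝ} (hx : 0 < x) :
    HasDerivAt (omegaRL (1 + μ)) (omegaRL μ x) x := by
  unfold omegaRL
  have h := (Real.hasDerivAt_rpow_const (p := μ) (Or.inl hx.ne')).div_const (Real.Gamma (1 + μ))
  have e : Real.Gamma (1 + μ) = μ * Real.Gamma μ := by rw [add_comm, Real.Gamma_add_one hμ]
  have h2 : μ * x ^ (μ - 1) / Real.Gamma (1 + μ) = x ^ (μ - 1) / Real.Gamma μ := by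
    rw [e, mul_div_mul_left _ _ hμ]
  rw [h2] at h
  simpa using h

/-- For an integer index, `ω_{1+p}` is the monomial `x^p / p!` on the whole real line. -/
lemma omegaRL_nat (p : ℕ) (x : ℝ) : omegaRL (1 + p) x = x ^ p / p.factorial := by
  unfold omegaRL
  rw [add_sub_cancel_left, Real.rpow_natCast, add_comm, Real.Gamma_nat_eq_factorial]

lemma gamma_sub_one_neg {ν : ℝ} (h0 : 0 < ν) (h1 : ν < 1) : Real.Gamma (ν - 1) < 0 := by
  have h := Real.Gamma_add_one (s := ν - 1) (by linarith)
  rw [sub_add_cancel] at h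
  have := Real.Gamma_pos_of_pos h0
  by_contra hc
  nlinarith

/-- A bound for `Γ(ν-1) / Γ(ν-1-r) = (-1)^r (2-ν)(3-ν)⋯(r+1-ν)`. -/
lemma inv_gamma_bound {ν : ℝ} (h0 : 0 < ν) (h1 : ν < 1) (r : ℕ) :
    |(Real.Gamma (ν - 1 - r))⁻¹| ≤ (r + 1).factorial * |(Real.Gamma (ν - 1))⁻¹| := by
  induction r with
  | zero => simp
  | succ r ih =>
    have hr : (0 : ℝ) ≤ r := r.cast_nonneg
    have hne : ν - 1 - ((r + 1 : ℕ) : ℝ) ≠ 0 := by push_cast; linarith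
    have h := Real.Gamma_add_one hne
    have e : ν - 1 - ((r + 1 : ℕ) : ℝ) + 1 = ν - 1 - r := by push_cast; ring
    rw [e] at h
    have e2 : (Real.Gamma (ν - 1 - ((r + 1 : ℕ) : ℝ)))⁻¹
        = (ν - 1 - ((r + 1 : ℕ) : ℝ)) * (Real.Gamma (ν - 1 - r))⁻¹ := by
      rw [h, mul_inv, mul_inv_cancel_left₀ hne]
    have e3 : |ν - 1 - ((r + 1 : ℕ) : ℝ)| ≤ r + 2 := by
      rw [abs_le]; push_cast; constructor <;> linarith
    rw [e2, abs_mul, Nat.factorial_succ (r + 1)]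
    calc _ ≤ ((r : ℝ) + 2) * ((r + 1).factorial * |(Real.Gamma (ν - 1))⁻¹|) := by gcongr
      _ = _ := by push_cast; ring

/-- The Taylor sum of `f 0` at the moving base point `x + θ h`, evaluated at `x + h`, has a
telescoping derivative in `θ`. -/
lemma hasDerivAt_taylor_sum (f : ℕ → ℝ → ℝ) (x h θ : ℝ)
    (hf : ∀ m, HasDerivAt (f m) (f (m + 1) (x + θ * h)) (x + θ * h)) (q : ℕ) :
    HasDerivAt
      (fun θ : ℝ => ∑ m ∈ Finset.range (q + 1), f m (x + θ * h) * ((1 - θ) * h) ^ m / m.factorial)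
      (h * f (q + 1) (x + θ * h) * ((1 - θ) * h) ^ q / q.factorial) θ := by
  have hb : HasDerivAt (fun θ : ℝ => x + θ * h) h θ := by
    simpa using ((hasDerivAt_id θ).mul_const h).const_add x
  have hc : HasDerivAt (fun θ : ℝ => (1 - θ) * h) (-h) θ := by
    simpa using ((hasDerivAt_id θ).const_sub 1).mul_const h
  have hfm : ∀ m, HasDerivAt (fun θ : ℝ => f m (x + θ * h)) (f (m + 1) (x + θ * h) * h) θ :=
    fun m => (hf m).comp θ hb
  induction q with
  | zero => simpa [mul_comm] using hfm 0
  | succ q ih =>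
    have h2 := ih.add (((hfm (q + 1)).mul (hc.pow (q + 1))).div_const ((q + 1).factorial : ℝ))
    have hfn : (fun θ : ℝ => ∑ m ∈ Finset.range (q + 1 + 1),
          f m (x + θ * h) * ((1 - θ) * h) ^ m / m.factorial)
        = (fun θ : ℝ => ∑ m ∈ Finset.range (q + 1),
            f m (x + θ * h) * ((1 - θ) * h) ^ m / m.factorial)
          + fun θ : ℝ => f (q + 1) (x + θ * h) * ((1 - θ) * h) ^ (q + 1) / (q + 1).factorial := by
      funext θ
      rw [Finset.sum_range_succ]
      rfl
    rw [hfn]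
    refine h2.congr_deriv ?_
    have hq : (q.factorial : ℝ) ≠ 0 := by positivity
    have hq1 : ((q : ℝ) + 1) ≠ 0 := by positivity
    simp only [Pi.pow_apply, Nat.factorial_succ]
    push_cast
    field_simp
    simp
    ring

lemma diff_abs_le_of_deriv {f f' g g' : ℝ → ℝ} {u v : ℝ} (huv : u ≤ v)
    (hf : ∀ x ∈ Set.Icc u v, HasDerivAt f (f' x) x)
    (hg : ∀ x ∈ Set.Icc u v, HasDerivAt g (g' x) x)
    (hb : ∀ x ∈ Set.Icc u v, |f' x| ≤ g' x) : |f v - f u| ≤ g v - g u := by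
  have key := image_norm_le_of_norm_deriv_right_le_deriv_boundary' (a := u) (b := v)
    (f := fun x => f x - f u) (f' := f') (B := fun x => g x - g u) (B' := g')
    (fun x hx => ((hf x hx).sub_const _).continuousAt.continuousWithinAt)
    (fun x hx => ((hf x ⟨hx.1, hx.2.le⟩).sub_const _).hasDerivWithinAt) (by simp)
    (fun x hx => ((hg x hx).sub_const _).continuousAt.continuousWithinAt)
    (fun x hx => ((hg x ⟨hx.1, hx.2.le⟩).sub_const _).hasDerivWithinAt)
    (fun x hx => hb x ⟨hx.1, hx.2.le⟩)
  exact key (Set.right_mem_Icc.2 huv)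

/-- Taylor remainder bound on a segment of either orientation (`h` may be negative), for a sequence
`f` of functions each of which is the derivative of the preceding one. -/
lemma taylor_bound (f : ℕ → ℝ → ℝ) (x h M : ℝ)
    (hf : ∀ m, ∀ θ ∈ Set.Icc (0 : ℝ) 1,
      HasDerivAt (f m) (f (m + 1) (x + θ * h)) (x + θ * h)) (q : ℕ)
    (hM : ∀ θ ∈ Set.Icc (0 : ℝ) 1, |f (q + 1) (x + θ * h)| ≤ M) :
    |f 0 (x + h) - ∑ m ∈ Finset.range (q + 1), f m x * h ^ m / m.factorial|
      ≤ M * |h| ^ (q + 1) / (q + 1).factorial := by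
  -- The comparison function is the antiderivative of `M |h|^(q+1) (1-θ)^q / q!`.
  have hg : ∀ θ ∈ Set.Icc (0 : ℝ) 1, HasDerivAt
      (fun θ : ℝ => -(M * |h| ^ (q + 1) / (q + 1).factorial * (1 - θ) ^ (q + 1)))
      (M * |h| ^ (q + 1) * (1 - θ) ^ q / q.factorial) θ := by
    intro θ _
    have h1 := ((((hasDerivAt_id θ).const_sub 1).pow (q + 1)).const_mul
      (M * |h| ^ (q + 1) / (q + 1).factorial)).neg
    refine h1.congr_deriv ?_
    have hq : (q.factorial : ℝ) ≠ 0 := by positivity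
    have hq1 : ((q : ℝ) + 1) ≠ 0 := by positivity
    simp only [Nat.factorial_succ]
    push_cast
    field_simp
    simp
  have key := diff_abs_le_of_deriv zero_le_one
    (fun θ hθ => hasDerivAt_taylor_sum f x h θ (fun m => hf m θ hθ) q) hg (by
      intro θ hθ
      have h1 : 0 ≤ 1 - θ := by linarith [hθ.2]
      rw [abs_div, abs_mul, abs_mul, abs_pow, abs_mul, abs_of_nonneg h1, Nat.abs_cast]
      calc |h| * |f (q + 1) (x + θ * h)| * ((1 - θ) * |h|) ^ q / q.factorial
          ≤ |h| * M * ((1 - θ) * |h|) ^ q / q.factorial := by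
            gcongr; exact hM θ hθ
        _ = _ := by rw [mul_pow]; ring)
  have e : ∑ m ∈ Finset.range (q + 1), f m (x + 1 * h) * ((1 - 1) * h) ^ m / m.factorial
      = f 0 (x + h) := by
    rw [Finset.sum_eq_single 0] <;> simp +contextual
  rw [e] at key
  simpa using key

/-- Pointwise bound of the Taylor remainder of `ω_{ν-1}` relative to the kernel `-ω_{ν-1}`. The
number `y` is a lower bound for the base point `x` and the evaluation point `x + h`. -/
lemma kernel_taylor_bound {ν η : ℝ} (h0 : 0 < ν) (h1 : ν < 1) (hη0 : 0 < η)
    (r : ℕ) (hr : 1 ≤ r) {x h y : ℝ} (hy : 0 < y) (hyx : y ≤ x) (hyz : y ≤ x + h)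
    (hz : x + h ≤ 2 * y) (hh : |h| ≤ η / 2 * y) :
    |omegaRL (ν - 1) (x + h)
        - ∑ m ∈ Finset.range r, omegaRL (ν - 1 - m) x * h ^ m / m.factorial|
      ≤ (2 : ℝ) ^ (2 - ν) * ((r : ℝ) + 1) * (η / 2) ^ r * (-omegaRL (ν - 1) (x + h)) := by
  obtain ⟨q, rfl⟩ : ∃ q, r = q + 1 := ⟨r - 1, by omega⟩
  have hseg : ∀ θ ∈ Set.Icc (0 : ℝ) 1, y ≤ x + θ * h := by
    intro θ hθ
    nlinarith [mul_nonneg hθ.1 (sub_nonneg.2 hyz), mul_nonneg (sub_nonneg.2 hθ.2) (sub_nonneg.2 hyx)]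
  have hpos : 0 < x + h := hy.trans_le hyz
  have key := taylor_bound (fun m => omegaRL (ν - 1 - m)) x h
    (y ^ (ν - 1 - ((q + 1 : ℕ) : ℝ) - 1) * |(Real.Gamma (ν - 1 - ((q + 1 : ℕ) : ℝ)))⁻¹|) (by
      intro m θ hθ
      have hm : (0 : ℝ) ≤ m := m.cast_nonneg
      have := hasDerivAt_omegaRL (ν - 1 - ((m + 1 : ℕ) : ℝ)) (by push_cast; linarith)
        (hy.trans_le (hseg θ hθ))
      have e : 1 + (ν - 1 - ((m + 1 : ℕ) : ℝ)) = ν - 1 - m := by push_cast; ring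
      rwa [e] at this) q (by
      intro θ hθ
      have hm : (0 : ℝ) ≤ q := q.cast_nonneg
      have hp := hy.trans_le (hseg θ hθ)
      simp only [omegaRL, div_eq_mul_inv, abs_mul]
      rw [abs_of_pos (Real.rpow_pos_of_pos hp _)]
      gcongr ?_ * _
      exact Real.rpow_le_rpow_of_nonpos hy (hseg θ hθ) (by push_cast; linarith))
  simp only [Nat.cast_zero, sub_zero] at key
  refine key.trans ?_
  have hG := gamma_sub_one_neg h0 h1
  have hker : -omegaRL (ν - 1) (x + h) = (x + h) ^ (ν - 2) * |(Real.Gamma (ν - 1))⁻¹| := by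
    rw [abs_of_neg (inv_lt_zero.2 hG), omegaRL, show ν - 1 - 1 = ν - 2 by ring]
    ring
  have hyp : y ^ (ν - 1 - ((q + 1 : ℕ) : ℝ) - 1) = y ^ (ν - 2) / y ^ (q + 1) := by
    rw [← Real.rpow_natCast, ← Real.rpow_sub hy]; ring_nf
  have hy2 : y ^ (ν - 2) ≤ 2 ^ (2 - ν) * (x + h) ^ (ν - 2) := by
    have h3 : y ^ (ν - 2) ≤ ((x + h) / 2) ^ (ν - 2) :=
      Real.rpow_le_rpow_of_nonpos (by positivity) (by linarith) (by linarith)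
    have h4 : (2 : ℝ) ^ (2 - ν) = ((2 : ℝ) ^ (ν - 2))⁻¹ := by
      rw [← Real.rpow_neg (by norm_num)]; ring_nf
    rw [Real.div_rpow hpos.le (by norm_num)] at h3
    rw [h4]
    exact h3.trans_eq (by ring)
  rw [hker, hyp]
  have hB := inv_gamma_bound h0 h1 (q + 1)
  set A := |(Real.Gamma (ν - 1))⁻¹|
  have hA : 0 ≤ A := abs_nonneg _
  have hF : ((q + 1).factorial : ℝ) ≠ 0 := by positivity
  calc _ ≤ y ^ (ν - 2) / y ^ (q + 1) * (((q + 1 + 1).factorial : ℝ) * A)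
          * (η / 2 * y) ^ (q + 1) / (q + 1).factorial := by gcongr
    _ = y ^ (ν - 2) * ((((q + 1 : ℕ) : ℝ) + 1) * (η / 2) ^ (q + 1) * A) := by
        rw [Nat.factorial_succ (q + 1), mul_pow]
        push_cast
        field_simp
    _ ≤ (2 ^ (2 - ν) * (x + h) ^ (ν - 2)) * ((((q + 1 : ℕ) : ℝ) + 1) * (η / 2) ^ (q + 1) * A) := by
        gcongr
    _ = _ := by ring

/-- For fixed `s`, the bound for the difference of the weight integrand `ω_ν(u-s) - ω_ν(v-s)` and
its Taylor approximation in `s`, obtained from the kernel bound by integrating in `τ` from `u` to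
`v`. -/
lemma integrand_bound {ν η : ℝ} (h0 : 0 < ν) (h1 : ν < 1) (hη0 : 0 < η) (hη1 : η ≤ 1)
    (r : ℕ) (hr : 1 ≤ r) {a b c u v s : ℝ} (hab : a < b) (hbc : b < c)
    (hsep : (b - a) / (c - b) ≤ η) (hcu : c ≤ u) (huv : u ≤ v) (has : a ≤ s) (hsb : s ≤ b) :
    |∑ m ∈ Finset.range r, ((-1 : ℝ) ^ (m + 1)
          * (omegaRL (ν - m) (v - (a + b) / 2) - omegaRL (ν - m) (u - (a + b) / 2)))
          * ((s - (a + b) / 2) ^ m / m.factorial)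
        - (omegaRL ν (u - s) - omegaRL ν (v - s))|
      ≤ (2 : ℝ) ^ (2 - ν) * ((r : ℝ) + 1) * (η / 2) ^ r
          * (omegaRL ν (u - s) - omegaRL ν (v - s)) := by
  set K : ℝ := (2 : ℝ) ^ (2 - ν) * ((r : ℝ) + 1) * (η / 2) ^ r
  set σ : ℝ := (a + b) / 2 with hσ
  have hsep' : b - a ≤ η * (c - b) := (div_le_iff₀ (by linarith)).1 hsep
  have hw : ∀ m : ℕ, ∀ ρ < c, ∀ x ∈ Set.Icc u v, HasDerivAt (fun τ => omegaRL (ν - m) (τ - ρ))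
      (omegaRL (ν - 1 - m) (x - ρ)) x := by
    intro m ρ hρ x hx
    have hm : (0 : ℝ) ≤ m := m.cast_nonneg
    have h := hasDerivAt_omegaRL (ν - 1 - m) (by linarith)
      (x := x - ρ) (by linarith [hx.1])
    rw [show 1 + (ν - 1 - (m : ℝ)) = ν - m by ring] at h
    exact h.comp_sub_const x ρ
  have hw0 : ∀ x ∈ Set.Icc u v, HasDerivAt (fun τ => omegaRL ν (τ - s))
      (omegaRL (ν - 1) (x - s)) x := by
    intro x hx
    simpa using hw 0 s (by linarith) x hx
  have key := diff_abs_le_of_deriv huv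
    (f := fun τ => ∑ m ∈ Finset.range r, ((-1 : ℝ) ^ (m + 1) * omegaRL (ν - m) (τ - σ))
          * ((s - σ) ^ m / m.factorial) + omegaRL ν (τ - s))
    (g := fun τ => K * (-omegaRL ν (τ - s)))
    (fun x hx => (HasDerivAt.fun_sum fun m _ =>
      ((hw m σ (by linarith) x hx).const_mul _).mul_const _).add (hw0 x hx))
    (fun x hx => (hw0 x hx).neg.const_mul K) (by
      intro x hx
      -- The smaller of base point and evaluation point is the best lower bound `y`; the cruder
      -- choice `y = c - b` would not give `x - s ≤ 2 y`.
      have hy : c - b ≤ min (x - σ) (x - s) :=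
        le_min (by linarith [hx.1]) (by linarith [hx.1])
      have hh : |σ - s| ≤ η / 2 * min (x - σ) (x - s) := by
        have h2 : |σ - s| ≤ (b - a) / 2 := by rw [abs_le]; constructor <;> linarith
        nlinarith
      have hz : x - s ≤ 2 * min (x - σ) (x - s) := by
        have h3 := le_abs_self (σ - s)
        rcases min_cases (x - σ) (x - s) with ⟨h, -⟩ | ⟨h, -⟩ <;> rw [h] at hy hh ⊢ <;> nlinarith
      have e : x - σ + (σ - s) = x - s := by ring
      have hk := kernel_taylor_bound h0 h1 hη0 r hr (x := x - σ) (h := σ - s)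
        (y := min (x - σ) (x - s)) (by linarith) (min_le_left _ _)
        (by rw [e]; exact min_le_right _ _) (by rwa [e]) hh
      rw [e] at hk
      convert hk using 2
      rw [add_comm, sub_eq_add_neg (omegaRL (ν - 1) (x - s)), ← Finset.sum_neg_distrib]
      congr 1
      refine Finset.sum_congr rfl fun m _ => ?_
      rw [← neg_sub s σ, neg_pow (s - σ) m, pow_succ]
      ring)
  convert key using 1
  · congr 1
    simp only [mul_sub, sub_mul, Finset.sum_sub_distrib]
    ring
  · ring

lemma integral_taylor_sum (D : ℕ → ℝ) (r : ℕ) (σ l m : ℝ) :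
    ∫ s in l..m, ∑ p ∈ Finset.range r, D p * ((s - σ) ^ p / p.factorial)
      = ∑ p ∈ Finset.range r, D p *
          (omegaRL (1 + (p + 1 : ℕ)) (m - σ) - omegaRL (1 + (p + 1 : ℕ)) (l - σ)) := by
  have hcont : Continuous fun s : ℝ =>
      ∑ p ∈ Finset.range r, D p * ((s - σ) ^ p / p.factorial) := by fun_prop
  rw [intervalIntegral.integral_eq_sub_of_hasDerivAt
    (f := fun s => ∑ p ∈ Finset.range r, D p * omegaRL (1 + (p + 1 : ℕ)) (s - σ)) _
    (hcont.intervalIntegrable _ _)]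
  · simp only [mul_sub, Finset.sum_sub_distrib]
  · intro x _
    refine HasDerivAt.fun_sum fun p _ => HasDerivAt.const_mul _ ?_
    simp only [omegaRL_nat]
    refine ((((hasDerivAt_id x).sub_const σ).pow (p + 1)).div_const _).congr_deriv ?_
    rw [Nat.factorial_succ]
    push_cast
    field_simp
    simp

/-- **Taylor approximation of the weights (Theorem 3).**
If `I_j ⊆ (a,b]`, `I_n ⊆ (c,d]` with `(b−a)/(c−b) ≤ η`, then the rank-`r` Taylor
approximation `β̃_nj = Σ_{p=1}^r φ_pn ψ_pj` satisfies
`|β̃_nj − β_nj| ≤ 2^{2−ν}(r+1)(η/2)^r β_nj`. -/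
theorem taylor_weight_approximation
    (T : ℝ) (hT : 0 < T) (N : ℕ) (hN : 1 ≤ N)
    (t : ℕ → ℝ) (ht0 : t 0 = 0) (htN : t N = T)
    (htmono : ∀ i, i < N → t i < t (i + 1))
    (ν : ℝ) (hν0 : 0 < ν) (hν1 : ν < 1)
    (k : ℕ → ℝ) (hk : ∀ n, k n = t n - t (n - 1))
    (β : ℕ → ℕ → ℝ)
    (hβ : ∀ j n, 1 ≤ j → j < n → n ≤ N →
      β n j = ∫ s in (t (j - 1))..(t j),
        ((t (n - 1) - s) ^ (ν - 1) - (t n - s) ^ (ν - 1)) / Real.Gamma ν)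
    (η : ℝ) (hη0 : 0 < η) (hη1 : η ≤ 1)
    (r : ℕ) (hr : 1 ≤ r)
    (j n : ℕ) (hj : 1 ≤ j) (hjn : j < n) (hnN : n ≤ N)
    (a b c d : ℝ) (ha : 0 ≤ a) (hab : a < b) (hbc : b < c) (hcd : c < d) (hdT : d ≤ T)
    (hIj : Set.Ioc (t (j - 1)) (t j) ⊆ Set.Ioc a b)
    (hIn : Set.Ioc (t (n - 1)) (t n) ⊆ Set.Ioc c d)
    (hsep : (b - a) / (c - b) ≤ η) :
    |(∑ p ∈ Finset.Icc 1 r,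
        ((-1 : ℝ) ^ p * Bfun (ν - p) ((t (n - 1) + t n) / 2 - (a + b) / 2) (k n))
          * Bfun p ((t (j - 1) + t j) / 2 - (a + b) / 2) (k j))
        - β n j|
      ≤ (2 : ℝ) ^ (2 - ν) * ((r : ℝ) + 1) * (η / 2) ^ r * β n j := by
  have hmono : ∀ i, 1 ≤ i → i ≤ N → t (i - 1) < t i := by
    intro i hi hiN
    have := htmono (i - 1) (by omega)
    rwa [Nat.sub_add_cancel hi] at this
  have hlj := hmono j hj (by omega)
  have huv := hmono n (by omega) hnN
  obtain ⟨hjb, haj⟩ := (Set.Ioc_subset_Ioc_iff hlj).1 hIj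
  obtain ⟨-, hcu⟩ := (Set.Ioc_subset_Ioc_iff huv).1 hIn
  rw [hβ j n hj hjn hnN]
  have hsum : (∑ p ∈ Finset.Icc 1 r,
        ((-1 : ℝ) ^ p * Bfun (ν - p) ((t (n - 1) + t n) / 2 - (a + b) / 2) (k n))
          * Bfun p ((t (j - 1) + t j) / 2 - (a + b) / 2) (k j))
      = ∫ s in (t (j - 1))..(t j), ∑ m ∈ Finset.range r, ((-1 : ℝ) ^ (m + 1)
          * (omegaRL (ν - m) (t n - (a + b) / 2) - omegaRL (ν - m) (t (n - 1) - (a + b) / 2)))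
          * ((s - (a + b) / 2) ^ m / m.factorial) := by
    rw [integral_taylor_sum, Finset.range_eq_Ico, ← Finset.Ico_succ_right_eq_Icc,
      Finset.sum_Ico_eq_sum_range, Finset.range_eq_Ico]
    refine Finset.sum_congr (by simp) fun m _ => ?_
    have e1 : ∀ i, (t (i - 1) + t i) / 2 - (a + b) / 2 + k i / 2 = t i - (a + b) / 2 := by
      intro i; rw [hk]; ring
    have e2 : ∀ i, (t (i - 1) + t i) / 2 - (a + b) / 2 - k i / 2 = t (i - 1) - (a + b) / 2 := by
      intro i; rw [hk]; ring
    have e3 : 1 + (ν - ((1 + m : ℕ) : ℝ)) = ν - m := by push_cast; ring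
    simp only [Bfun, e1, e2, e3]
    rw [add_comm 1 m]
  have hint : ∀ s, ((t (n - 1) - s) ^ (ν - 1) - (t n - s) ^ (ν - 1)) / Real.Gamma ν
      = omegaRL ν (t (n - 1) - s) - omegaRL ν (t n - s) := fun s => by
    simp only [omegaRL, sub_div]
  simp only [hint]
  have hi2 : IntervalIntegrable (fun s => omegaRL ν (t (n - 1) - s) - omegaRL ν (t n - s))
      MeasureTheory.volume (t (j - 1)) (t j) := by
    apply ContinuousOn.intervalIntegrable_of_Icc hlj.le
    have : ∀ w, c ≤ w → ContinuousOn (fun s => omegaRL ν (w - s)) (Set.Icc (t (j - 1)) (t j)) := by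
      intro w hw
      refine ContinuousOn.div_const (ContinuousOn.rpow_const (by fun_prop) fun s hs => Or.inl ?_) _
      have := hs.2
      exact (by linarith : 0 < w - s).ne'
    exact (this _ hcu).sub (this _ (hcu.trans huv.le))
  rw [hsum, ← intervalIntegral.integral_sub
    (Continuous.intervalIntegrable (by fun_prop) _ _) hi2, ← intervalIntegral.integral_const_mul,
    ← Real.norm_eq_abs]
  refine intervalIntegral.norm_integral_le_of_norm_le hlj.le (Filter.Eventually.of_forall ?_)
    (hi2.const_mul _)
  intro s hs
  exact integrand_bound hν0 hν1 hη0 hη1 r hr hab hbc hsep hcu huv.le (haj.trans hs.1.le)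
    (hs.2.trans hjb)
end

section
/- Let 𝒯 be a cluster tree for the partition 0 = t_0 < ... < t_N = T, let L be a leaf of 𝒯 and 0 < η ≤ 1. If 𝒞_1 and 𝒞_2 are two (L,η)-admissible covers and L' ∈ 𝒞_1 is a leaf of 𝒯 that is not (L,η)-admissible, then L' ∈ 𝒞_2. In other words, all (L,η)-admissible covers contain exactly the same non-admissible leaves. -/
/-!
Two nodes of a cluster tree that share a subinterval lie on one branch. For a leaf this means that
every node sharing a subinterval with it is an ancestor of it or equal to it
(`ClusterTree.desc_leaf`).

The leaf `L'` is contained in the history of `L`, which the second cover exhausts, so some member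
`C` of that cover shares a subinterval with `L'`; hence `L'` is a descendant of `C` or equal to it.
If `C` is a leaf, then `C = L'`. If `C` is admissible, so is `L'`: passing to a subcluster does not
increase the length and does not decrease the distance to `L` (`admissible_of_subset`). This
is impossible because `L'` was chosen to be a leaf that is not admissible.
-/

/-- A **cluster tree** on the index set `{1, …, N}`.  A cluster `C(j,n) = {I_j, …, I_n}`
of consecutive subintervals is represented by the pair `(j, n)`.  The root is `C(1,N)`
and every node is either a leaf or the disjoint union of its children. -/
structure ClusterTree (N : ℕ) where
  /-- the nodes of the tree, each a cluster `(j, n)` -/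
  nodes : Finset (ℕ × ℕ)
  valid : ∀ c ∈ nodes, 1 ≤ c.1 ∧ c.1 ≤ c.2 ∧ c.2 ≤ N
  root_mem : (1, N) ∈ nodes
  /-- the children of each node (empty iff the node is a leaf) -/
  children : ℕ × ℕ → Finset (ℕ × ℕ)
  children_sub : ∀ c ∈ nodes, children c ⊆ nodes
  /-- every non-leaf node is the union of its children -/
  children_union : ∀ c ∈ nodes, children c ≠ ∅ →
    (children c).biUnion (fun d => Finset.Icc d.1 d.2) = Finset.Icc c.1 c.2
  /-- the children of a node are pairwise disjoint -/
  children_disjoint : ∀ c ∈ nodes, ∀ d₁ ∈ children c, ∀ d₂ ∈ children c, d₁ ≠ d₂ →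
    Disjoint (Finset.Icc d₁.1 d₁.2) (Finset.Icc d₂.1 d₂.2)
  /-- every non-root node has a parent -/
  parent_exists : ∀ c ∈ nodes, c ≠ (1, N) → ∃ p ∈ nodes, c ∈ children p
  /-- parents are unique -/
  parent_unique : ∀ p₁ ∈ nodes, ∀ p₂ ∈ nodes, ∀ c : ℕ × ℕ,
    c ∈ children p₁ → c ∈ children p₂ → p₁ = p₂
  /-- the generation of a node: `0` for the root, `Gen(parent) + 1` otherwise -/
  gen : ℕ × ℕ → ℕ
  gen_root : gen (1, N) = 0
  gen_children : ∀ c ∈ nodes, ∀ d ∈ children c, gen d = gen c + 1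

namespace ClusterTree

/-- A node is a leaf if it has no children. -/
def IsLeaf {N : ℕ} (𝒯 : ClusterTree N) (c : ℕ × ℕ) : Prop :=
  c ∈ 𝒯.nodes ∧ 𝒯.children c = ∅

end ClusterTree

/-- The underlying point set `∪C(j,n) = (t_{j-1}, t_n]` of a cluster. -/
def cSet (t : ℕ → ℝ) (c : ℕ × ℕ) : Set ℝ := Set.Ioc (t (c.1 - 1)) (t c.2)

/-- The length `Len(C(j,n)) = t_n − t_{j-1}` of a cluster. -/
noncomputable def cLen (t : ℕ → ℝ) (c : ℕ × ℕ) : ℝ := t c.2 - t (c.1 - 1)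

/-- The Euclidean distance between the underlying point sets of two clusters. -/
noncomputable def cDist (t : ℕ → ℝ) (c₁ c₂ : ℕ × ℕ) : ℝ :=
  sInf {r : ℝ | ∃ x ∈ cSet t c₁, ∃ y ∈ cSet t c₂, r = |x - y|}

/-- The history `History(C(j,n)) = (0, t_{j-1}]` of a cluster. -/
def cHistory (t : ℕ → ℝ) (c : ℕ × ℕ) : Set ℝ := Set.Ioc 0 (t (c.1 - 1))

/-- A cluster `c` is `(L,η)`-admissible if `∪c ⊆ History(L)` and
`Len(c) ≤ η · Dist(c, L)`. -/
def Admissible (t : ℕ → ℝ) (η : ℝ) (L c : ℕ × ℕ) : Prop :=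
  cSet t c ⊆ cHistory t L ∧ cLen t c ≤ η * cDist t c L

/-- An `(L,η)`-admissible cover: a set of pairwise disjoint nodes of the tree whose
union is `History(L)`, each member being `(L,η)`-admissible or a leaf. -/
def AdmissibleCover {N : ℕ} (𝒯 : ClusterTree N) (t : ℕ → ℝ) (η : ℝ)
    (L : ℕ × ℕ) (𝒞 : Finset (ℕ × ℕ)) : Prop :=
  𝒞 ⊆ 𝒯.nodes ∧
  (∀ c₁ ∈ 𝒞, ∀ c₂ ∈ 𝒞, c₁ ≠ c₂ →
    Disjoint (Finset.Icc c₁.1 c₁.2) (Finset.Icc c₂.1 c₂.2)) ∧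
  (⋃ c ∈ 𝒞, cSet t c) = cHistory t L ∧
  (∀ c ∈ 𝒞, Admissible t η L c ∨ 𝒯.IsLeaf c)

/-- The descendant relation: `d` is reached from `c` by finitely many (possibly zero) steps from a
node of the tree to one of its children. -/
def ClusterTree.Desc {N : ℕ} (𝒯 : ClusterTree N) : ℕ × ℕ → ℕ × ℕ → Prop :=
  Relation.ReflTransGen (fun p c => p ∈ 𝒯.nodes ∧ c ∈ 𝒯.children p)

namespace ClusterTree

variable {N : ℕ} (𝒯 : ClusterTree N)

lemma child_subset {p c : ℕ × ℕ} (hp : p ∈ 𝒯.nodes) (hc : c ∈ 𝒯.children p) :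
    Finset.Icc c.1 c.2 ⊆ Finset.Icc p.1 p.2 := by
  rw [← 𝒯.children_union p hp (Finset.ne_empty_of_mem hc)]
  exact Finset.subset_biUnion_of_mem (fun d : ℕ × ℕ => Finset.Icc d.1 d.2) hc

lemma Desc.subset {p c : ℕ × ℕ} (h : 𝒯.Desc p c) :
    Finset.Icc c.1 c.2 ⊆ Finset.Icc p.1 p.2 := by
  induction h with
  | refl => exact subset_rfl
  | tail _ hbc ih => exact (𝒯.child_subset hbc.1 hbc.2).trans ih

lemma Desc.eq_of_leaf {p c : ℕ × ℕ} (h : 𝒯.Desc p c) (hp : 𝒯.IsLeaf p) : p = c := by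
  rcases Relation.ReflTransGen.cases_head h with h | ⟨d, ⟨_, hd⟩, _⟩
  · exact h
  · simp [hp.2] at hd

lemma desc_root (n : ℕ) : ∀ c ∈ 𝒯.nodes, 𝒯.gen c = n → 𝒯.Desc (1, N) c := by
  induction n with
  | zero =>
    intro c hc hg
    by_cases h : c = (1, N)
    · exact h ▸ Relation.ReflTransGen.refl
    · obtain ⟨p, hp, hcp⟩ := 𝒯.parent_exists c hc h
      have := 𝒯.gen_children p hp c hcp
      omega
  | succ n ih =>
    intro c hc hg
    by_cases h : c = (1, N)
    · exact h ▸ Relation.ReflTransGen.refl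
    · obtain ⟨p, hp, hcp⟩ := 𝒯.parent_exists c hc h
      have := 𝒯.gen_children p hp c hcp
      exact (ih p hp (by omega)).tail ⟨hp, hcp⟩

/-- A leaf descends from every node with which it shares an index `k`. The induction runs down the
tree: by disjointness, the branch from the parent of `c` to the leaf can only pass through `c`. -/
lemma desc_leaf {l : ℕ × ℕ} (hl : 𝒯.IsLeaf l) {k : ℕ} (hk : k ∈ Finset.Icc l.1 l.2) (n : ℕ) :
    ∀ c ∈ 𝒯.nodes, 𝒯.gen c = n → k ∈ Finset.Icc c.1 c.2 → 𝒯.Desc c l := by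
  induction n with
  | zero =>
    intro c hc hg hkc
    by_cases h : c = (1, N)
    · exact h ▸ 𝒯.desc_root _ l hl.1 rfl
    · obtain ⟨p, hp, hcp⟩ := 𝒯.parent_exists c hc h
      have := 𝒯.gen_children p hp c hcp
      omega
  | succ n ih =>
    intro c hc hg hkc
    by_cases h : c = (1, N)
    · exact h ▸ 𝒯.desc_root _ l hl.1 rfl
    · obtain ⟨p, hp, hcp⟩ := 𝒯.parent_exists c hc h
      have hgen := 𝒯.gen_children p hp c hcp
      have hpl : 𝒯.Desc p l := ih p hp (by omega) (𝒯.child_subset hp hcp hkc)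
      rcases Relation.ReflTransGen.cases_head hpl with rfl | ⟨d, ⟨_, hd⟩, hdl⟩
      · simp [hl.2] at hcp
      · have hkd : k ∈ Finset.Icc d.1 d.2 := Desc.subset 𝒯 hdl hk
        have hcd : c = d := by
          by_contra hne
          exact Finset.disjoint_left.mp (𝒯.children_disjoint p hp c hcp d hd hne) hkc hkd
        exact hcd ▸ hdl

end ClusterTree

/-- Admissibility passes to subclusters. The nonemptiness hypotheses keep the infimum defining the
distance of the subcluster from being the junk value `0` of an empty set. -/
lemma admissible_of_subset {t : ℕ → ℝ} {η : ℝ} (hη : 0 ≤ η) {L c d : ℕ × ℕ}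
    (hL : (cSet t L).Nonempty) (hd : (cSet t d).Nonempty)
    (hlo : t (c.1 - 1) ≤ t (d.1 - 1)) (hhi : t d.2 ≤ t c.2)
    (h : Admissible t η L c) : Admissible t η L d := by
  have hsub : cSet t d ⊆ cSet t c := Set.Ioc_subset_Ioc hlo hhi
  refine ⟨hsub.trans h.1, ?_⟩
  have hdist : cDist t c L ≤ cDist t d L := by
    obtain ⟨x, hx⟩ := hd
    obtain ⟨y, hy⟩ := hL
    refine csInf_le_csInf ⟨0, ?_⟩ ⟨_, x, hx, y, hy, rfl⟩ ?_
    · rintro r ⟨x, _, y, _, rfl⟩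
      exact abs_nonneg _
    · rintro r ⟨x, hx, y, hy, rfl⟩
      exact ⟨x, hsub hx, y, hy, rfl⟩
  have hlen : cLen t d ≤ cLen t c := sub_le_sub hhi hlo
  exact hlen.trans (h.2.trans (mul_le_mul_of_nonneg_left hdist hη))

/-- **Lemma 1: all admissible covers contain the same non-admissible leaves.**
If `𝒞₁` and `𝒞₂` are `(L,η)`-admissible covers and `L' ∈ 𝒞₁` is a leaf that is not
`(L,η)`-admissible, then `L' ∈ 𝒞₂`. -/
theorem nonadmissible_leaves_common
    {N : ℕ} (hN : 1 ≤ N) (t : ℕ → ℝ) (ht0 : t 0 = 0)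
    (htmono : ∀ i, i < N → t i < t (i + 1))
    (𝒯 : ClusterTree N)
    (η : ℝ) (hη0 : 0 < η) (hη1 : η ≤ 1)
    (L : ℕ × ℕ) (hL : 𝒯.IsLeaf L)
    (𝒞₁ 𝒞₂ : Finset (ℕ × ℕ))
    (h₁ : AdmissibleCover 𝒯 t η L 𝒞₁) (h₂ : AdmissibleCover 𝒯 t η L 𝒞₂)
    (L' : ℕ × ℕ) (hL'mem : L' ∈ 𝒞₁) (hL'leaf : 𝒯.IsLeaf L')
    (hL'notadm : ¬ Admissible t η L L') :
    L' ∈ 𝒞₂ := by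
  have hmono : StrictMonoOn t (Set.Iic N) := by
    refine strictMonoOn_of_lt_add_one Set.ordConnected_Iic fun a _ _ ha => htmono a ?_
    exact Nat.lt_of_succ_le ha
  have hne : ∀ c ∈ 𝒯.nodes, t (c.1 - 1) < t c.2 := by
    intro c hc
    obtain ⟨h1, h2, h3⟩ := 𝒯.valid c hc
    exact hmono (Set.mem_Iic.2 (by omega)) (Set.mem_Iic.2 h3) (by omega)
  obtain ⟨hsub, -, hunion, hmem⟩ := h₂
  obtain ⟨l1, l2, l3⟩ := 𝒯.valid L' hL'leaf.1
  -- The right endpoint of the first subinterval of `L'` singles out a member of `𝒞₂`.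
  have hx : t L'.1 ∈ cSet t L' :=
    ⟨hmono (Set.mem_Iic.2 (by omega)) (Set.mem_Iic.2 (by omega)) (by omega),
      hmono.monotoneOn (Set.mem_Iic.2 (by omega)) (Set.mem_Iic.2 l3) l2⟩
  have hxH : t L'.1 ∈ cHistory t L := by
    rw [← h₁.2.2.1]
    exact Set.mem_biUnion (Finset.mem_coe.2 hL'mem) hx
  rw [← hunion] at hxH
  obtain ⟨C, hC, hxC⟩ := Set.mem_iUnion₂.1 hxH
  obtain ⟨c1, c2, c3⟩ := 𝒯.valid C (hsub hC)
  have hk : L'.1 ∈ Finset.Icc C.1 C.2 := by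
    have hlt := (hmono.lt_iff_lt (Set.mem_Iic.2 (by omega)) (Set.mem_Iic.2 (by omega))).1 hxC.1
    have hle := (hmono.le_iff_le (Set.mem_Iic.2 (by omega)) (Set.mem_Iic.2 (by omega))).1 hxC.2
    exact Finset.mem_Icc.2 ⟨by omega, hle⟩
  have hdesc : 𝒯.Desc C L' :=
    𝒯.desc_leaf hL'leaf (Finset.mem_Icc.2 ⟨le_rfl, l2⟩) _ C (hsub hC) rfl hk
  rcases hmem C hC with hadm | hleaf
  · refine absurd (admissible_of_subset hη0.le ?_ ⟨_, hx⟩ ?_ ?_ hadm) hL'notadm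
    · exact Set.nonempty_Ioc.2 (hne L hL.1)
    · have := Finset.mem_Icc.1 hk
      exact hmono.monotoneOn (Set.mem_Iic.2 (by omega)) (Set.mem_Iic.2 (by omega)) (by omega)
    · have hlast : L'.2 ∈ Finset.Icc C.1 C.2 :=
        ClusterTree.Desc.subset 𝒯 hdesc (Finset.mem_Icc.2 ⟨l2, le_rfl⟩)
      exact hmono.monotoneOn (Set.mem_Iic.2 l3) (Set.mem_Iic.2 c3) (Finset.mem_Icc.1 hlast).2
  · exact ClusterTree.Desc.eq_of_leaf 𝒯 hdesc hleaf ▸ hC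
end

section
/- Let 𝒯 be a cluster tree for the partition 0 = t_0 < ... < t_N = T, let L be a leaf of 𝒯 with History(L) nonempty, and let 0 < η ≤ 1. Then there exists an (L,η)-admissible cover ℳ with the following property: for every (L,η)-admissible cover 𝒞 and every C ∈ 𝒞 there is M ∈ ℳ with C ⊆ M. Consequently, ℳ is the unique (L,η)-admissible cover of minimal cardinality: every (L,η)-admissible cover 𝒞 satisfies either 𝒞 = ℳ or #ℳ < #𝒞. -/
/-! ### Laminarity of the nodes of a cluster tree -/

namespace ClusterTree

variable {N : ℕ} (𝒯 : ClusterTree N)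

lemma exists_parent_of_gen_pos {c : ℕ × ℕ} (hc : c ∈ 𝒯.nodes) (h : 0 < 𝒯.gen c) :
    ∃ p ∈ 𝒯.nodes, c ∈ 𝒯.children p ∧ 𝒯.gen c = 𝒯.gen p + 1 := by
  have hne : c ≠ (1, N) := by
    rintro rfl
    rw [𝒯.gen_root] at h
    omega
  obtain ⟨p, hp, hcp⟩ := 𝒯.parent_exists c hc hne
  exact ⟨p, hp, hcp, 𝒯.gen_children p hp c hcp⟩

lemma eq_root_of_gen_eq_zero {c : ℕ × ℕ} (hc : c ∈ 𝒯.nodes) (h : 𝒯.gen c = 0) :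
    c = (1, N) := by
  by_contra hne
  obtain ⟨p, hp, hcp⟩ := 𝒯.parent_exists c hc hne
  have := 𝒯.gen_children p hp c hcp
  omega

lemma disjoint_of_gen_eq (k : ℕ) : ∀ c ∈ 𝒯.nodes, ∀ d ∈ 𝒯.nodes, 𝒯.gen c = k → 𝒯.gen d = k →
    c ≠ d → Disjoint (Finset.Icc c.1 c.2) (Finset.Icc d.1 d.2) := by
  induction k with
  | zero =>
    intro c hc d hd hck hdk hne
    exact absurd ((𝒯.eq_root_of_gen_eq_zero hc hck).trans
      (𝒯.eq_root_of_gen_eq_zero hd hdk).symm) hne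
  | succ k ih =>
    intro c hc d hd hck hdk hne
    obtain ⟨p, hp, hcp, hgp⟩ := 𝒯.exists_parent_of_gen_pos hc (by omega)
    obtain ⟨q, hq, hdq, hgq⟩ := 𝒯.exists_parent_of_gen_pos hd (by omega)
    by_cases hpq : p = q
    · subst hpq
      exact 𝒯.children_disjoint p hp c hcp d hdq hne
    · exact Finset.disjoint_of_subset_left (𝒯.child_subset hp hcp)
        (Finset.disjoint_of_subset_right (𝒯.child_subset hq hdq)
          (ih p hp q hq (by omega) (by omega) hpq))

lemma exists_ancestor (m : ℕ) : ∀ d ∈ 𝒯.nodes, 𝒯.gen d = m → ∀ k ≤ m,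
    ∃ a ∈ 𝒯.nodes, 𝒯.gen a = k ∧ Finset.Icc d.1 d.2 ⊆ Finset.Icc a.1 a.2 := by
  induction m with
  | zero =>
    intro d hd hdm k hk
    exact ⟨d, hd, by omega, subset_rfl⟩
  | succ m ih =>
    intro d hd hdm k hk
    rcases Nat.lt_or_ge m k with h | h
    · exact ⟨d, hd, by omega, subset_rfl⟩
    · obtain ⟨p, hp, hdp, hgp⟩ := 𝒯.exists_parent_of_gen_pos hd (by omega)
      obtain ⟨a, ha, hak, hpa⟩ := ih p hp (by omega) k h
      exact ⟨a, ha, hak, (𝒯.child_subset hp hdp).trans hpa⟩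

/-- Compare `c` with the ancestor of `d` in the generation of `c`. -/
lemma subset_or_disjoint_of_gen_le {c d : ℕ × ℕ} (hc : c ∈ 𝒯.nodes) (hd : d ∈ 𝒯.nodes)
    (h : 𝒯.gen c ≤ 𝒯.gen d) : Finset.Icc d.1 d.2 ⊆ Finset.Icc c.1 c.2 ∨
      Disjoint (Finset.Icc c.1 c.2) (Finset.Icc d.1 d.2) := by
  obtain ⟨a, ha, hak, hda⟩ := 𝒯.exists_ancestor _ d hd rfl _ h
  by_cases hca : c = a
  · subst hca
    exact Or.inl hda
  · exact Or.inr (Finset.disjoint_of_subset_right hda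
      (𝒯.disjoint_of_gen_eq _ c hc a ha rfl hak hca))

/-- Laminarity: two nodes sharing an index are nested. -/
lemma nested {c d : ℕ × ℕ} (hc : c ∈ 𝒯.nodes) (hd : d ∈ 𝒯.nodes) {i : ℕ}
    (hic : i ∈ Finset.Icc c.1 c.2) (hid : i ∈ Finset.Icc d.1 d.2) :
    Finset.Icc c.1 c.2 ⊆ Finset.Icc d.1 d.2 ∨ Finset.Icc d.1 d.2 ⊆ Finset.Icc c.1 c.2 := by
  rcases le_total (𝒯.gen c) (𝒯.gen d) with h | h
  · rcases 𝒯.subset_or_disjoint_of_gen_le hc hd h with h | h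
    · exact Or.inr h
    · exact absurd hid (Finset.disjoint_left.1 h hic)
  · rcases 𝒯.subset_or_disjoint_of_gen_le hd hc h with h | h
    · exact Or.inl h
    · exact absurd hic (Finset.disjoint_left.1 h hid)

lemma disjoint_of_isLeaf_of_gen_lt {c d : ℕ × ℕ} (hc : 𝒯.IsLeaf c) (hd : d ∈ 𝒯.nodes)
    (h : 𝒯.gen c < 𝒯.gen d) : Disjoint (Finset.Icc c.1 c.2) (Finset.Icc d.1 d.2) := by
  obtain ⟨a, ha, hak, hda⟩ := 𝒯.exists_ancestor _ d hd rfl _ (Nat.succ_le_of_lt h)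
  obtain ⟨p, hp, hap, hgp⟩ := 𝒯.exists_parent_of_gen_pos ha (by omega)
  -- `p` is the ancestor of `d` in the generation of `c`; it has a child, so it is not `c`.
  have hne : c ≠ p := by
    rintro rfl
    rw [hc.2] at hap
    exact absurd hap (Finset.notMem_empty _)
  exact Finset.disjoint_of_subset_right (hda.trans (𝒯.child_subset hp hap))
    (𝒯.disjoint_of_gen_eq _ c hc.1 p hp rfl (by omega) hne)

lemma disjoint_of_isLeaf {c d : ℕ × ℕ} (hc : 𝒯.IsLeaf c) (hd : 𝒯.IsLeaf d) (hne : c ≠ d) :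
    Disjoint (Finset.Icc c.1 c.2) (Finset.Icc d.1 d.2) := by
  rcases lt_trichotomy (𝒯.gen c) (𝒯.gen d) with h | h | h
  · exact 𝒯.disjoint_of_isLeaf_of_gen_lt hc hd.1 h
  · exact 𝒯.disjoint_of_gen_eq _ c hc.1 d hd.1 rfl h.symm hne
  · exact (𝒯.disjoint_of_isLeaf_of_gen_lt hd hc.1 h).symm

/-- A node of largest generation containing a given index is a leaf. -/
lemma exists_isLeaf_mem {i : ℕ} (hi : i ∈ Finset.Icc 1 N) :
    ∃ c, 𝒯.IsLeaf c ∧ i ∈ Finset.Icc c.1 c.2 := by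
  obtain ⟨c, hc, hmax⟩ := Finset.exists_max_image
    (𝒯.nodes.filter fun c => i ∈ Finset.Icc c.1 c.2) 𝒯.gen
    ⟨(1, N), Finset.mem_filter.2 ⟨𝒯.root_mem, hi⟩⟩
  rw [Finset.mem_filter] at hc
  refine ⟨c, ⟨hc.1, ?_⟩, hc.2⟩
  by_contra hne
  have hic := hc.2
  rw [← 𝒯.children_union c hc.1 hne, Finset.mem_biUnion] at hic
  obtain ⟨d, hd, hid⟩ := hic
  have h1 := hmax d (Finset.mem_filter.2 ⟨𝒯.children_sub c hc.1 hd, hid⟩)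
  have h2 := 𝒯.gen_children c hc.1 d hd
  omega

lemma eq_of_Icc_eq {c d : ℕ × ℕ} (hc : c ∈ 𝒯.nodes) (hd : d ∈ 𝒯.nodes)
    (h : Finset.Icc c.1 c.2 = Finset.Icc d.1 d.2) : c = d := by
  have h1 := (Finset.Icc_subset_Icc_iff (𝒯.valid c hc).2.1).1 h.subset
  have h2 := (Finset.Icc_subset_Icc_iff (𝒯.valid d hd).2.1).1 h.superset
  exact Prod.ext (le_antisymm h2.1 h1.1) (le_antisymm h1.2 h2.2)

end ClusterTree

/-! ### From point sets to index intervals -/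

lemma strictMonoOn_grid {N : ℕ} {t : ℕ → ℝ} (htmono : ∀ i, i < N → t i < t (i + 1)) :
    StrictMonoOn t (Set.Iic N) := by
  intro i _ j hj hij
  induction j, hij using Nat.le_induction with
  | base => exact htmono i hj
  | succ j hij ih =>
    have hj' : j < N := hj
    exact (ih (Set.mem_Iic.2 hj'.le)).trans (htmono j hj')

/-- The index `i` of the subinterval `I_i` containing a given point of `(0, t_m]`. -/
lemma exists_index {t : ℕ → ℝ} (ht0 : t 0 = 0) {m : ℕ} {x : ℝ} (hx0 : 0 < x) (hxm : x ≤ t m) :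
    ∃ i, 1 ≤ i ∧ i ≤ m ∧ t (i - 1) < x ∧ x ≤ t i := by
  classical
  have hex : ∃ i, x ≤ t i := ⟨m, hxm⟩
  have h1 : 1 ≤ Nat.find hex := by
    by_contra h
    have h0 : Nat.find hex = 0 := by omega
    have := Nat.find_spec hex
    rw [h0, ht0] at this
    linarith
  exact ⟨Nat.find hex, h1, Nat.find_min' hex hxm,
    not_le.1 (Nat.find_min hex (by omega)), Nat.find_spec hex⟩

section Grid

variable {N : ℕ} {t : ℕ → ℝ}

lemma grid_mem_cSet (ht : StrictMonoOn t (Set.Iic N)) {c : ℕ × ℕ} (h1 : 1 ≤ c.1)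
    (h2 : c.1 ≤ c.2) (h3 : c.2 ≤ N) {i : ℕ} (hi : i ≤ N) :
    t i ∈ cSet t c ↔ i ∈ Finset.Icc c.1 c.2 := by
  rw [cSet, Set.mem_Ioc, Finset.mem_Icc,
    ht.lt_iff_lt (Set.mem_Iic.2 (by omega)) (Set.mem_Iic.2 hi),
    ht.le_iff_le (Set.mem_Iic.2 hi) (Set.mem_Iic.2 h3)]
  omega

lemma grid_mem_cHistory (ht0 : t 0 = 0) (ht : StrictMonoOn t (Set.Iic N)) {L : ℕ × ℕ}
    (hL : L.1 ≤ N) {i : ℕ} (hi : i ≤ N) :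
    t i ∈ cHistory t L ↔ 1 ≤ i ∧ i ≤ L.1 - 1 := by
  rw [cHistory, Set.mem_Ioc, ← ht0,
    ht.lt_iff_lt (Set.mem_Iic.2 (by omega)) (Set.mem_Iic.2 hi),
    ht.le_iff_le (Set.mem_Iic.2 hi) (Set.mem_Iic.2 (by omega))]
  omega

/-- A family of clusters fills the history of `L` exactly when all its members end before `L` and
every index before `L` lies in one of them. -/
lemma cover_iff (ht0 : t 0 = 0) (ht : StrictMonoOn t (Set.Iic N)) {L : ℕ × ℕ}
    (hL : L.1 ≤ N) {𝒞 : Finset (ℕ × ℕ)} (hv : ∀ c ∈ 𝒞, 1 ≤ c.1 ∧ c.1 ≤ c.2 ∧ c.2 ≤ N) :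
    (⋃ c ∈ 𝒞, cSet t c) = cHistory t L ↔
      (∀ c ∈ 𝒞, c.2 ≤ L.1 - 1) ∧
        ∀ i, 1 ≤ i → i ≤ L.1 - 1 → ∃ c ∈ 𝒞, i ∈ Finset.Icc c.1 c.2 := by
  constructor
  · intro h
    constructor
    · intro c hc
      obtain ⟨h1, h2, h3⟩ := hv c hc
      have hmem : t c.2 ∈ cSet t c :=
        (grid_mem_cSet ht h1 h2 h3 h3).2 (Finset.mem_Icc.2 ⟨h2, le_rfl⟩)
      have : t c.2 ∈ cHistory t L := h ▸ Set.mem_biUnion hc hmem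
      exact ((grid_mem_cHistory ht0 ht hL h3).1 this).2
    · intro i hi1 hi2
      have hiN : i ≤ N := by omega
      have hi := (grid_mem_cHistory ht0 ht hL hiN).2 ⟨hi1, hi2⟩
      rw [← h, Set.mem_iUnion₂] at hi
      obtain ⟨c, hc, hic⟩ := hi
      obtain ⟨h1, h2, h3⟩ := hv c hc
      exact ⟨c, hc, (grid_mem_cSet ht h1 h2 h3 hiN).1 hic⟩
  · rintro ⟨hle, hcov⟩
    apply Set.Subset.antisymm
    · intro x hx
      obtain ⟨c, hc, hxc⟩ := Set.mem_iUnion₂.1 hx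
      obtain ⟨h1, h2, h3⟩ := hv c hc
      have hcL := hle c hc
      constructor
      · rw [← ht0]
        exact (ht.monotoneOn (Set.mem_Iic.2 (by omega)) (Set.mem_Iic.2 (by omega))
          (Nat.zero_le _)).trans_lt hxc.1
      · exact hxc.2.trans
          (ht.monotoneOn (Set.mem_Iic.2 h3) (Set.mem_Iic.2 (by omega)) hcL)
    · intro x hx
      obtain ⟨i, hi1, hi2, hxl, hxr⟩ := exists_index ht0 hx.1 hx.2
      obtain ⟨c, hc, hic⟩ := hcov i hi1 hi2
      obtain ⟨h1, h2, h3⟩ := hv c hc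
      rw [Finset.mem_Icc] at hic
      refine Set.mem_iUnion₂.2 ⟨c, hc, ?_, ?_⟩
      · exact (ht.monotoneOn (Set.mem_Iic.2 (by omega)) (Set.mem_Iic.2 (by omega))
          (by omega)).trans_lt hxl
      · exact hxr.trans
          (ht.monotoneOn (Set.mem_Iic.2 (by omega)) (Set.mem_Iic.2 h3) hic.2)

end Grid

/-! ### Maximal eligible nodes -/

/-- The nodes that may occur in an admissible cover: those ending before `L` that are admissible
or leaves.  "Before `L`" is encoded on indices. -/
def Eligible {N : ℕ} (𝒯 : ClusterTree N) (t : ℕ → ℝ) (η : ℝ) (L c : ℕ × ℕ) : Prop :=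
  c ∈ 𝒯.nodes ∧ c.2 ≤ L.1 - 1 ∧ (Admissible t η L c ∨ 𝒯.IsLeaf c)

open Classical in
/-- The eligible nodes that are maximal for inclusion. -/
noncomputable def maxEligible {N : ℕ} (𝒯 : ClusterTree N) (t : ℕ → ℝ) (η : ℝ) (L : ℕ × ℕ) :
    Finset (ℕ × ℕ) :=
  𝒯.nodes.filter fun c => Eligible 𝒯 t η L c ∧
    ∀ d, Eligible 𝒯 t η L d → Finset.Icc c.1 c.2 ⊆ Finset.Icc d.1 d.2 → c = d

section Maximal

variable {N : ℕ} {𝒯 : ClusterTree N} {t : ℕ → ℝ} {η : ℝ} {L : ℕ × ℕ}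

lemma mem_maxEligible {c : ℕ × ℕ} : c ∈ maxEligible 𝒯 t η L ↔ Eligible 𝒯 t η L c ∧
    ∀ d, Eligible 𝒯 t η L d → Finset.Icc c.1 c.2 ⊆ Finset.Icc d.1 d.2 → c = d := by
  classical
  rw [maxEligible, Finset.mem_filter]
  exact ⟨fun h => h.2, fun h => ⟨h.1.1, h⟩⟩

lemma Eligible.exists_maxEligible {c : ℕ × ℕ} (hc : Eligible 𝒯 t η L c) :
    ∃ M ∈ maxEligible 𝒯 t η L, Finset.Icc c.1 c.2 ⊆ Finset.Icc M.1 M.2 := by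
  classical
  obtain ⟨M, hM, hmax⟩ := Finset.exists_max_image
    (𝒯.nodes.filter fun d => Eligible 𝒯 t η L d ∧ Finset.Icc c.1 c.2 ⊆ Finset.Icc d.1 d.2)
    (fun d => (Finset.Icc d.1 d.2).card)
    ⟨c, Finset.mem_filter.2 ⟨hc.1, hc, subset_rfl⟩⟩
  rw [Finset.mem_filter] at hM
  obtain ⟨hMn, hMe, hcM⟩ := hM
  refine ⟨M, mem_maxEligible.2 ⟨hMe, fun d hd hMd => ?_⟩, hcM⟩
  exact 𝒯.eq_of_Icc_eq hMn hd.1 (Finset.eq_of_subset_of_card_le hMd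
    (hmax d (Finset.mem_filter.2 ⟨hd.1, hd, hcM.trans hMd⟩)))

lemma maxEligible_eq_of_mem {c d : ℕ × ℕ} (hc : c ∈ maxEligible 𝒯 t η L)
    (hd : d ∈ maxEligible 𝒯 t η L) {i : ℕ} (hic : i ∈ Finset.Icc c.1 c.2)
    (hid : i ∈ Finset.Icc d.1 d.2) : c = d := by
  rw [mem_maxEligible] at hc hd
  rcases 𝒯.nested hc.1.1 hd.1.1 hic hid with h | h
  · exact hc.2 d hd.1 h
  · exact (hd.2 c hc.1 h).symm

/-- A leaf through an index before `L` is disjoint from `L`, so it ends before `L`. -/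
lemma exists_eligible_mem (hL : 𝒯.IsLeaf L) {i : ℕ} (hi1 : 1 ≤ i) (hi2 : i ≤ L.1 - 1) :
    ∃ c, Eligible 𝒯 t η L c ∧ i ∈ Finset.Icc c.1 c.2 := by
  obtain ⟨hL1, hL2, hL3⟩ := 𝒯.valid L hL.1
  obtain ⟨c, hc, hic⟩ := 𝒯.exists_isLeaf_mem (i := i) (Finset.mem_Icc.2 ⟨hi1, by omega⟩)
  refine ⟨c, ⟨hc.1, ?_, Or.inr hc⟩, hic⟩
  rw [Finset.mem_Icc] at hic
  have hne : c ≠ L := by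
    rintro rfl
    omega
  by_contra hlt
  exact Finset.disjoint_left.1 (𝒯.disjoint_of_isLeaf hc hL hne)
    (Finset.mem_Icc.2 ⟨by omega, by omega⟩ : L.1 ∈ Finset.Icc c.1 c.2)
    (Finset.mem_Icc.2 ⟨le_rfl, hL2⟩)

end Maximal

/-! ### Minimality -/

/-- **Theorem 4: existence and uniqueness of the minimal admissible cover.**
There is an `(L,η)`-admissible cover `ℳ` such that every member of any
`(L,η)`-admissible cover is contained in some member of `ℳ`; consequently every
`(L,η)`-admissible cover `𝒞` satisfies `𝒞 = ℳ` or `#ℳ < #𝒞`. -/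
theorem minimal_admissible_cover
    {N : ℕ} (hN : 1 ≤ N) (t : ℕ → ℝ) (ht0 : t 0 = 0)
    (htmono : ∀ i, i < N → t i < t (i + 1))
    (𝒯 : ClusterTree N)
    (η : ℝ) (hη0 : 0 < η) (hη1 : η ≤ 1)
    (L : ℕ × ℕ) (hL : 𝒯.IsLeaf L)
    (hhist : (cHistory t L).Nonempty) :
    ∃ ℳ : Finset (ℕ × ℕ), AdmissibleCover 𝒯 t η L ℳ ∧
      (∀ 𝒞 : Finset (ℕ × ℕ), AdmissibleCover 𝒯 t η L 𝒞 →
        ∀ c ∈ 𝒞, ∃ M ∈ ℳ, Finset.Icc c.1 c.2 ⊆ Finset.Icc M.1 M.2) ∧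
      (∀ 𝒞 : Finset (ℕ × ℕ), AdmissibleCover 𝒯 t η L 𝒞 →
        𝒞 = ℳ ∨ ℳ.card < 𝒞.card) := by
  have ht := strictMonoOn_grid htmono
  have hLN : L.1 ≤ N := (𝒯.valid L hL.1).2.1.trans (𝒯.valid L hL.1).2.2
  have hmem : ∀ 𝒞 : Finset (ℕ × ℕ), AdmissibleCover 𝒯 t η L 𝒞 →
      (∀ c ∈ 𝒞, Eligible 𝒯 t η L c) ∧
        ∀ i, 1 ≤ i → i ≤ L.1 - 1 → ∃ c ∈ 𝒞, i ∈ Finset.Icc c.1 c.2 := by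
    rintro 𝒞 ⟨hsub, -, hun, hal⟩
    obtain ⟨hle, hcov⟩ := (cover_iff ht0 ht hLN fun c hc => 𝒯.valid c (hsub hc)).1 hun
    exact ⟨fun c hc => ⟨hsub hc, hle c hc, hal c hc⟩, hcov⟩
  have hfine : ∀ 𝒞 : Finset (ℕ × ℕ), AdmissibleCover 𝒯 t η L 𝒞 → ∀ c ∈ 𝒞,
      ∃ M ∈ maxEligible 𝒯 t η L, Finset.Icc c.1 c.2 ⊆ Finset.Icc M.1 M.2 :=
    fun 𝒞 h𝒞 c hc => ((hmem 𝒞 h𝒞).1 c hc).exists_maxEligible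
  refine ⟨maxEligible 𝒯 t η L, ⟨?_, ?_, ?_, ?_⟩, hfine, ?_⟩
  · exact fun c hc => (mem_maxEligible.1 hc).1.1
  · intro c hc d hd hne
    exact Finset.disjoint_left.2 fun i hic hid => hne (maxEligible_eq_of_mem hc hd hic hid)
  · refine (cover_iff ht0 ht hLN fun c hc => 𝒯.valid c (mem_maxEligible.1 hc).1.1).2
      ⟨fun c hc => (mem_maxEligible.1 hc).1.2.1, fun i hi1 hi2 => ?_⟩
    obtain ⟨c, hc, hic⟩ := exists_eligible_mem (t := t) (η := η) hL hi1 hi2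
    obtain ⟨M, hM, hcM⟩ := hc.exists_maxEligible
    exact ⟨M, hM, hcM hic⟩
  · exact fun c hc => (mem_maxEligible.1 hc).1.2.2
  · intro 𝒞 h𝒞
    obtain ⟨hel, hcov⟩ := hmem 𝒞 h𝒞
    choose! f hfM hfsub using hfine 𝒞 h𝒞
    have hcov' : ∀ M ∈ maxEligible 𝒯 t η L, ∀ i ∈ Finset.Icc M.1 M.2,
        ∃ c ∈ 𝒞, f c = M ∧ i ∈ Finset.Icc c.1 c.2 := by
      intro M hM i hi
      have hMe := (mem_maxEligible.1 hM).1
      have hi' := Finset.mem_Icc.1 hi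
      obtain ⟨c, hc, hic⟩ := hcov i ((𝒯.valid M hMe.1).1.trans hi'.1) (hi'.2.trans hMe.2.1)
      exact ⟨c, hc, maxEligible_eq_of_mem (hfM c hc) hM (hfsub c hc hic) hi, hic⟩
    have hsurj : Set.SurjOn f 𝒞 (maxEligible 𝒯 t η L) := by
      intro M hM
      obtain ⟨c, hc, hcM, -⟩ := hcov' M hM M.1
        (Finset.mem_Icc.2 ⟨le_rfl, (𝒯.valid M (mem_maxEligible.1 hM).1.1).2.1⟩)
      exact ⟨c, hc, hcM⟩
    rcases Nat.lt_or_ge (maxEligible 𝒯 t η L).card 𝒞.card with hlt | hge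
    · exact Or.inr hlt
    left
    have hinj : Set.InjOn f 𝒞 := Finset.injOn_of_surjOn_of_card_le f hfM hsurj hge
    -- By injectivity, only `c` itself can contribute to covering `f c`.
    have hfix : ∀ c ∈ 𝒞, c = f c := by
      intro c hc
      refine 𝒯.eq_of_Icc_eq (hel c hc).1 (mem_maxEligible.1 (hfM c hc)).1.1
        (Finset.Subset.antisymm (hfsub c hc) fun i hi => ?_)
      obtain ⟨c', hc', hcc', hic'⟩ := hcov' (f c) (hfM c hc) i hi
      rwa [hinj hc' hc hcc'] at hic'
    refine Finset.eq_of_subset_of_card_le (fun c hc => ?_)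
      (Finset.card_le_card_of_surjOn f hsurj)
    rw [hfix c hc]
    exact hfM c hc
end

section
/- Let 0 < ν < 1 and T > 0, and let v : [0,T] → ℝ be piecewise C^1. Define the Riemann–Liouville operator 𝓑v(t) = (d/dt) ∫_0^t ω_ν(t−s) v(s) ds, where ω_ν(t) = t^{ν−1}/Γ(ν). Then ∫_0^T 𝓑v(t) · v(t) dt ≥ ρ_ν T^{ν−1} ∫_0^T v(t)^2 dt, where ρ_ν = π^{1−ν} (1−ν)^{1−ν} / (2−ν)^{2−ν} · sin(πν/2). -/
/-!
The bound is proved with the larger constant `ω_ν(T/2) = 2^(1-ν) T^(ν-1) / Γ(ν)` in place of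
`ρ_ν T^(ν-1)`, without Fourier analysis. For Lipschitz `v` one has, at almost every `t`, the pointwise
inequality `2 v(t) 𝓑v(t) ≥ 𝓑(v²)(t) + ω_ν(t) v(t)²` (`deriv_abelInt_sq_le`). Indeed, for fixed `t`,
expanding the square in `P(σ) = ∫_0^σ ω_ν(σ-x) (v(t) - v(x))² dx` shows that `P'(t)` is the right side
minus the left side, and `P'(t) ≤ 0` because `ω_ν` is decreasing and `(v(t) - v(x))² = O((t-x)²)`.
Integrating over `[0, T]`, with `∫_0^T 𝓑(v²) = ∫_0^T ω_ν(T-t) v(t)² dt` from the fundamental theorem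
of calculus (`abelInt_deriv`), yields

  `2 ∫ v 𝓑v ≥ ∫ (ω_ν(t) + ω_ν(T-t)) v(t)² dt ≥ 2 ω_ν(T/2) ∫ v²`

by convexity of `ω_ν` (`abelInt_coercive`). It remains to compare constants, `ρ_ν ≤ 2^(1-ν) / Γ(ν)`
(`rho_le`), which follows from `Γ(ν+1) ≤ 1`, Bernoulli's inequality and weighted AM-GM.
-/

open Real

/-- `v` is piecewise `C¹` on `[0, T]`: there is a finite partition of `[0,T]` on each
subinterval of which `v` is continuously differentiable. -/
def PiecewiseC1On (v : ℝ → ℝ) (T : ℝ) : Prop :=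
  ∃ (m : ℕ) (a : ℕ → ℝ), 0 < m ∧ a 0 = 0 ∧ a m = T ∧
    (∀ i, i < m → a i < a (i + 1)) ∧
    ∀ i, i < m → ContDiffOn ℝ 1 v (Set.Icc (a i) (a (i + 1)))

section Auxiliary

open MeasureTheory Set Filter Topology

/-! ### Comparison of the constants -/

/-- Since `Γ(1) = Γ(2) = 1`, convexity gives `ν Γ(ν) = Γ(ν + 1) ≤ 1`. -/
lemma le_inv_Gamma {ν : ℝ} (hν0 : 0 < ν) (hν1 : ν < 1) : ν ≤ 1 / Real.Gamma ν := by
  have hG : 0 < Real.Gamma ν := Real.Gamma_pos_of_pos hν0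
  rw [le_div_iff₀ hG, ← Real.Gamma_add_one hν0.ne']
  have h := Real.convexOn_Gamma.2 (show (1:ℝ) ∈ Set.Ioi 0 by simp) (show (2:ℝ) ∈ Set.Ioi 0 by simp)
    (show 0 ≤ 1 - ν by linarith) hν0.le (by ring)
  simp only [smul_eq_mul, Real.Gamma_one, Real.Gamma_two] at h
  rw [show (1 - ν) * 1 + ν * 2 = ν + 1 by ring] at h
  linarith

/-- The comparison of constants with `α = 1 - ν`, after clearing the denominator and cancelling the
factor `2 ^ α`. For small `α` the bound `sin ≤ 1` suffices, away from `0` the bound `sin x ≤ x`. -/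
lemma rho_aux {α : ℝ} (h0 : 0 < α) (h1 : α < 1) :
    (π / 2) ^ α * α ^ α * Real.sin (π * (1 - α) / 2) ≤ (1 - α) * (1 + α) ^ (1 + α) := by
  have hπ : 0 < π := Real.pi_pos
  have hπ4 : π < 3.15 := Real.pi_lt_d2
  rcases le_total α (2 / 5) with h | h
  · -- Both factors reduce to polynomials by Bernoulli: `(1 - α) (1 + α + α²) = 1 - α³`.
    have hA : (π / 2) ^ α * α ^ α ≤ 1 - α ^ 3 := by
      rw [← Real.mul_rpow (by positivity) h0.le]
      have := rpow_one_add_le_one_add_mul_self (s := π / 2 * α - 1)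
        (by have := mul_pos hπ h0; linarith) h0.le h1.le
      rw [show 1 + (π / 2 * α - 1) = π / 2 * α by ring] at this
      refine this.trans ?_
      have : α * (α ^ 2 + π / 2 * α - 1) ≤ 0 :=
        mul_nonpos_of_nonneg_of_nonpos h0.le (by nlinarith)
      nlinarith
    have hB : 1 + (1 + α) * α ≤ (1 + α) ^ (1 + α) :=
      one_add_mul_self_le_rpow_one_add (by linarith) (by linarith)
    calc _ ≤ (π / 2) ^ α * α ^ α * 1 := by
          gcongr; exact Real.sin_le_one _
      _ ≤ (1 - α) * (1 + (1 + α) * α) := by nlinarith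
      _ ≤ _ := by gcongr
  · have hs : Real.sin (π * (1 - α) / 2) ≤ π * (1 - α) / 2 :=
      Real.sin_le (by have := mul_pos hπ (sub_pos.2 h1); linarith)
    have hb : π / 2 * α ^ (α / (1 + α)) ≤ 1 + α := by
      have := Real.geom_mean_le_arith_mean2_weighted (w₁ := 1 / (1 + α)) (w₂ := α / (1 + α))
        (p₁ := 1) (p₂ := α) (by positivity) (by positivity) zero_le_one h0.le (by field_simp)
      rw [Real.one_rpow, one_mul] at this
      calc _ ≤ π / 2 * (1 / (1 + α) * 1 + α / (1 + α) * α) := by gcongr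
        _ = (π / 2 * (1 + α ^ 2)) / (1 + α) := by field_simp
        _ ≤ _ := by
          rw [div_le_iff₀ (by positivity)]
          nlinarith
    -- Raise `hb`, a consequence of weighted AM-GM, to the power `1 + α`.
    have hc : (π / 2) ^ (1 + α) * α ^ α ≤ (1 + α) ^ (1 + α) := by
      have := Real.rpow_le_rpow (by positivity) hb (show 0 ≤ 1 + α by linarith)
      rwa [Real.mul_rpow (by positivity) (by positivity), ← Real.rpow_mul h0.le,
        div_mul_cancel₀ _ (by positivity)] at this
    calc _ ≤ (π / 2) ^ α * α ^ α * (π * (1 - α) / 2) := by gcongr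
      _ = (1 - α) * ((π / 2) ^ (1 + α) * α ^ α) := by
        rw [Real.rpow_add (by positivity), Real.rpow_one]; ring
      _ ≤ _ := by gcongr

/-- The constant `ρ_ν` is at most `2 ^ (1 - ν) / Γ(ν) = ω_ν(1 / 2)`. -/
lemma rho_le {ν : ℝ} (hν0 : 0 < ν) (hν1 : ν < 1) :
    π ^ (1 - ν) * ((1 - ν) ^ (1 - ν) / (2 - ν) ^ (2 - ν)) * Real.sin (π * ν / 2)
      ≤ 2 ^ (1 - ν) / Real.Gamma ν := by
  have h := rho_aux (α := 1 - ν) (by linarith) (by linarith)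
  rw [show 1 - (1 - ν) = ν by ring, show 1 + (1 - ν) = 2 - ν by ring,
    Real.div_rpow Real.pi_pos.le zero_le_two] at h
  have h2 : (0 : ℝ) < 2 ^ (1 - ν) := by positivity
  have h3 : 0 < (2 - ν) ^ (2 - ν) := Real.rpow_pos_of_pos (by linarith) _
  calc _ = 2 ^ (1 - ν) * (π ^ (1 - ν) / 2 ^ (1 - ν) * (1 - ν) ^ (1 - ν) * Real.sin (π * ν / 2))
        / (2 - ν) ^ (2 - ν) := by field_simp
    _ ≤ 2 ^ (1 - ν) * (ν * (2 - ν) ^ (2 - ν)) / (2 - ν) ^ (2 - ν) := by gcongr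
    _ = 2 ^ (1 - ν) * ν := by field_simp
    _ ≤ 2 ^ (1 - ν) * (1 / Real.Gamma ν) := by gcongr; exact le_inv_Gamma hν0 hν1
    _ = _ := by ring

/-! ### Piecewise `C¹` functions are Lipschitz -/

lemma LipschitzOnWith.icc_union {v : ℝ → ℝ} {a b c : ℝ} {K L : NNReal} (hab : a ≤ b) (hbc : b ≤ c)
    (h1 : LipschitzOnWith K v (Icc a b)) (h2 : LipschitzOnWith L v (Icc b c)) :
    LipschitzOnWith (max K L) v (Icc a c) := by
  have h1' := h1.weaken (le_max_left K L)
  have h2' := h2.weaken (le_max_right K L)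
  have key : ∀ x ∈ Icc a b, ∀ y ∈ Icc b c, dist (v x) (v y) ≤ (max K L : NNReal) * dist x y := by
    intro x hx y hy
    have e1 := h1'.dist_le_mul x hx b ⟨hab, le_rfl⟩
    have e2 := h2'.dist_le_mul b ⟨le_rfl, hbc⟩ y hy
    have e3 := dist_triangle (v x) (v b) (v y)
    have e4 : dist x y = dist x b + dist b y := by
      rw [Real.dist_eq, Real.dist_eq, Real.dist_eq, abs_of_nonpos (by linarith [hx.2, hy.1]),
        abs_of_nonpos (by linarith [hx.2]), abs_of_nonpos (by linarith [hy.1])]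
      ring
    rw [e4, mul_add]
    linarith
  refine LipschitzOnWith.of_dist_le_mul fun x hx y hy => ?_
  rcases le_total x b with hxb | hxb <;> rcases le_total y b with hyb | hyb
  · exact h1'.dist_le_mul x ⟨hx.1, hxb⟩ y ⟨hy.1, hyb⟩
  · exact key x ⟨hx.1, hxb⟩ y ⟨hyb, hy.2⟩
  · rw [dist_comm, dist_comm x]
    exact key y ⟨hy.1, hyb⟩ x ⟨hxb, hx.2⟩
  · exact h2'.dist_le_mul x ⟨hxb, hx.2⟩ y ⟨hyb, hy.2⟩

/-- The subintervals in `PiecewiseC1On` are closed, so consecutive pieces agree at the shared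
endpoint; hence `v` is continuous and even Lipschitz on `[0, T]`. -/
lemma PiecewiseC1On.exists_lipschitzOnWith {v : ℝ → ℝ} {T : ℝ} (hv : PiecewiseC1On v T) :
    ∃ K, LipschitzOnWith K v (Icc 0 T) := by
  obtain ⟨m, a, -, h0, hT, hlt, hC⟩ := hv
  suffices h : ∀ i ≤ m, a 0 ≤ a i ∧ ∃ K, LipschitzOnWith K v (Icc (a 0) (a i)) by
    simpa [h0, hT] using (h m le_rfl).2
  intro i
  induction i with
  | zero => exact fun _ => ⟨le_rfl, 0, by simp [LipschitzOnWith]⟩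
  | succ i ih =>
    intro hi
    obtain ⟨hle, K, hK⟩ := ih (by omega)
    obtain ⟨L, hL⟩ := (hC i hi).exists_lipschitzOnWith one_ne_zero (convex_Icc _ _) isCompact_Icc
    exact ⟨hle.trans (hlt i hi).le, _, hK.icc_union hle (hlt i hi).le hL⟩

/-! ### Abel integrals of Lipschitz functions -/

/-- The Abel integral `∫_0^σ (σ - x)^(ν-1) v(x) dx`, that is, `Γ(ν)` times the Riemann–Liouville
integral of order `ν`; its derivative is `Γ(ν) 𝓑v`. -/
noncomputable def abelInt (ν : ℝ) (v : ℝ → ℝ) (σ : ℝ) : ℝ := ∫ x in (0 : ℝ)..σ, (σ - x) ^ (ν - 1) * v x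

lemma intervalIntegrable_kernel {ν : ℝ} (hν0 : 0 < ν) (a b σ : ℝ) :
    IntervalIntegrable (fun x => (σ - x) ^ (ν - 1)) volume a b := by
  simpa using (intervalIntegral.intervalIntegrable_rpow' (a := σ - a) (b := σ - b)
    (r := ν - 1) (by linarith)).comp_sub_left σ

lemma integral_kernel {ν : ℝ} (hν0 : 0 < ν) (a σ : ℝ) :
    ∫ x in a..σ, (σ - x) ^ (ν - 1) = (σ - a) ^ ν / ν := by
  rw [intervalIntegral.integral_comp_sub_left (fun y => y ^ (ν - 1)) σ,
    integral_rpow (Or.inl (by linarith))]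
  simp [Real.zero_rpow hν0.ne']

lemma intervalIntegrable_kernel_mul {ν : ℝ} (hν0 : 0 < ν) {T : ℝ} {v : ℝ → ℝ}
    (hv : ContinuousOn v (Icc 0 T)) {a b : ℝ} (c : ℝ) (ha : a ∈ Icc 0 T) (hb : b ∈ Icc 0 T) :
    IntervalIntegrable (fun x => (c - x) ^ (ν - 1) * v x) volume a b :=
  (intervalIntegrable_kernel hν0 a b c).mul_continuousOn (hv.mono (uIcc_subset_Icc ha hb))

/-- The Abel integral of a Lipschitz function is the explicit singular term coming from `v 0` plus
a Lipschitz remainder: with `w` the extension of `v - v 0` by zero to the left, the remainder is the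
convolution `∫_0^T y^(ν-1) w(σ - y) dy` over an interval that does not depend on `σ`. -/
lemma abelInt_decomp {ν : ℝ} (hν0 : 0 < ν) {T : ℝ} (hT : 0 < T) {v : ℝ → ℝ} {K : NNReal}
    (hv : LipschitzOnWith K v (Icc 0 T)) :
    ∃ (H : ℝ → ℝ) (L : NNReal), LipschitzWith L H ∧ H 0 = 0 ∧
      ∀ σ ∈ Icc 0 T, abelInt ν v σ = v 0 * (σ ^ ν / ν) + H σ := by
  -- `u` extends `v` beyond `T` as well, so that `w` is Lipschitz on the whole line.
  obtain ⟨u, hu, huv⟩ := hv.extend_real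
  have hi : IntervalIntegrable (fun y : ℝ => y ^ (ν - 1)) volume 0 T :=
    intervalIntegral.intervalIntegrable_rpow' (by linarith)
  set w : ℝ → ℝ := fun z => u (max z 0) - u 0 with hw
  have hwL : LipschitzWith K w := by
    refine LipschitzWith.of_dist_le_mul fun x y => ?_
    rw [hw, dist_sub_right]
    refine (hu.dist_le_mul _ _).trans ?_
    gcongr
    exact abs_max_sub_max_le_abs x y 0
  have hwi : ∀ σ a b, IntervalIntegrable (fun y => y ^ (ν - 1) * w (σ - y)) volume a b := by
    intro σ a b
    exact (intervalIntegral.intervalIntegrable_rpow' (by linarith)).mul_continuousOn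
      (hwL.continuous.comp (by fun_prop)).continuousOn
  have hC : 0 ≤ ∫ y in (0 : ℝ)..T, y ^ (ν - 1) :=
    intervalIntegral.integral_nonneg hT.le fun y hy => Real.rpow_nonneg hy.1 _
  refine ⟨fun σ => ∫ y in (0 : ℝ)..T, y ^ (ν - 1) * w (σ - y),
    K * (∫ y in (0 : ℝ)..T, y ^ (ν - 1)).toNNReal, ?_, ?_, ?_⟩
  · refine LipschitzWith.of_dist_le_mul fun x y => ?_
    rw [Real.dist_eq, ← intervalIntegral.integral_sub (hwi _ _ _) (hwi _ _ _)]
    have hb : ∀ z ∈ Ioc 0 T, ‖z ^ (ν - 1) * w (x - z) - z ^ (ν - 1) * w (y - z)‖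
        ≤ z ^ (ν - 1) * (K * dist x y) := by
      intro z hz
      have h0 : 0 ≤ z ^ (ν - 1) := Real.rpow_nonneg hz.1.le _
      rw [← mul_sub, norm_mul, Real.norm_of_nonneg h0]
      gcongr
      simpa [Real.dist_eq] using hwL.dist_le_mul (x - z) (y - z)
    refine (intervalIntegral.norm_integral_le_of_norm_le hT.le (.of_forall hb)
      (hi.mul_const _)).trans (le_of_eq ?_)
    rw [intervalIntegral.integral_mul_const]
    rw [NNReal.coe_mul, Real.coe_toNNReal _ hC]
    ring
  · refine intervalIntegral.integral_zero_ae (.of_forall fun y hy => ?_)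
    rw [uIoc_of_le hT.le] at hy
    simp [hw, hy.1.le]
  · intro σ hσ
    have h1 : ∫ y in (0 : ℝ)..T, y ^ (ν - 1) * w (σ - y)
        = ∫ y in (0 : ℝ)..σ, y ^ (ν - 1) * w (σ - y) := by
      rw [← intervalIntegral.integral_add_adjacent_intervals (hwi σ 0 σ)
        (hwi σ σ T), add_eq_left]
      refine intervalIntegral.integral_zero_ae (.of_forall fun y hy => ?_)
      rw [uIoc_of_le hσ.2] at hy
      simp [hw, hy.1.le]
    have h2 : ∫ y in (0 : ℝ)..σ, y ^ (ν - 1) * w (σ - y)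
        = ∫ x in (0 : ℝ)..σ, (σ - x) ^ (ν - 1) * w x := by
      have := intervalIntegral.integral_comp_sub_left (a := 0) (b := σ)
        (fun y => y ^ (ν - 1) * w (σ - y)) σ
      simpa using this.symm
    have h3 : ∫ x in (0 : ℝ)..σ, (σ - x) ^ (ν - 1) * w x
        = ∫ x in (0 : ℝ)..σ, ((σ - x) ^ (ν - 1) * v x - (σ - x) ^ (ν - 1) * v 0) := by
      refine intervalIntegral.integral_congr fun x hx => ?_
      rw [uIcc_of_le hσ.1] at hx
      simp only [hw, max_eq_left hx.1]
      rw [huv ⟨hx.1, hx.2.trans hσ.2⟩, huv ⟨le_rfl, hT.le⟩]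
      ring
    beta_reduce
    rw [h1, h2, h3, intervalIntegral.integral_sub
      (intervalIntegrable_kernel_mul hν0 hv.continuousOn _ ⟨le_rfl, hT.le⟩ hσ)
      ((intervalIntegrable_kernel hν0 _ _ _).mul_const _), intervalIntegral.integral_mul_const,
      integral_kernel hν0, abelInt, sub_zero]
    ring

/-- The Abel integral of a Lipschitz function is differentiable almost everywhere and satisfies the
fundamental theorem of calculus on `[0, T]`. -/
lemma abelInt_deriv {ν : ℝ} (hν0 : 0 < ν) {T : ℝ} (hT : 0 < T) {v : ℝ → ℝ} {K : NNReal}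
    (hv : LipschitzOnWith K v (Icc 0 T)) :
    (∀ᵐ t, t ∈ Ioo 0 T → DifferentiableAt ℝ (abelInt ν v) t) ∧
      IntervalIntegrable (deriv (abelInt ν v)) volume 0 T ∧
      ∫ t in (0 : ℝ)..T, deriv (abelInt ν v) t = abelInt ν v T := by
  obtain ⟨H, L, hH, hH0, hdec⟩ := abelInt_decomp hν0 hT hv
  have hae : ∀ᵐ t, t ∈ Ioo 0 T →
      HasDerivAt (abelInt ν v) (v 0 * t ^ (ν - 1) + deriv H t) t := by
    filter_upwards [hH.ae_differentiableAt_real] with t hHt ht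
    have hpow : HasDerivAt (fun σ : ℝ => v 0 * (σ ^ ν / ν)) (v 0 * t ^ (ν - 1)) t := by
      have := ((Real.hasDerivAt_rpow_const (x := t) (p := ν) (Or.inl ht.1.ne')).div_const
        ν).const_mul (v 0)
      rwa [mul_div_cancel_left₀ _ hν0.ne'] at this
    refine (hpow.add hHt.hasDerivAt).congr_of_eventuallyEq ?_
    filter_upwards [Ioo_mem_nhds ht.1 ht.2] with σ hσ using hdec σ (Ioo_subset_Icc_self hσ)
  have hae' : ∀ᵐ t, t ∈ uIoc 0 T → v 0 * t ^ (ν - 1) + deriv H t = deriv (abelInt ν v) t := by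
    have hne : ∀ᵐ t : ℝ, t ≠ T := by simp [ae_iff]
    filter_upwards [hae, hne] with t h hne ht
    rw [uIoc_of_le hT.le] at ht
    exact (h ⟨ht.1, lt_of_le_of_ne ht.2 hne⟩).deriv.symm
  have hAC : AbsolutelyContinuousOnInterval H 0 T :=
    (hH.lipschitzOnWith (s := uIcc 0 T)).absolutelyContinuousOnInterval
  have hi1 : IntervalIntegrable (fun t : ℝ => v 0 * t ^ (ν - 1)) volume 0 T :=
    (intervalIntegral.intervalIntegrable_rpow' (by linarith)).const_mul _
  refine ⟨hae.mono fun t h ht => (h ht).differentiableAt,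
    (hi1.add hAC.intervalIntegrable_deriv).congr_ae ((ae_restrict_iff' measurableSet_uIoc).2 hae'), ?_⟩
  rw [← intervalIntegral.integral_congr_ae hae',
    intervalIntegral.integral_add hi1 hAC.intervalIntegrable_deriv,
    hAC.integral_deriv_eq_sub, intervalIntegral.integral_const_mul,
    integral_rpow (Or.inl (by linarith)), hdec T ⟨hT.le, le_rfl⟩, hH0]
  simp [Real.zero_rpow hν0.ne']

/-- The pointwise inequality `2 v 𝓑v ≥ 𝓑(v²) + ω_ν v²` (up to the factor `Γ(ν)`). The difference of the
two sides at `t` is minus the derivative at `t` of the Abel integral `P` of `x ↦ (v t - v x)²`, a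
function vanishing to second order at `t`. -/
lemma deriv_abelInt_sq_le {ν : ℝ} (hν0 : 0 < ν) (hν1 : ν < 1) {T : ℝ} {v : ℝ → ℝ} {K : NNReal}
    (hv : LipschitzOnWith K v (Icc 0 T)) {t A B : ℝ} (ht : t ∈ Ioo 0 T)
    (hA : HasDerivAt (abelInt ν v) A t) (hB : HasDerivAt (abelInt ν fun x => v x ^ 2) B t) :
    t ^ (ν - 1) * v t ^ 2 + B ≤ 2 * (A * v t) := by
  have hvc := hv.continuousOn
  have h0T : (0 : ℝ) ∈ Icc 0 T := ⟨le_rfl, (ht.1.trans ht.2).le⟩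
  set g : ℝ → ℝ := fun x => (v t - v x) ^ 2 with hg
  have hgc : ContinuousOn g (Icc 0 T) := by fun_prop
  have hgK : ∀ x ∈ Icc 0 T, g x ≤ K ^ 2 * (t - x) ^ 2 := by
    intro x hx
    have := hv.dist_le_mul t (Ioo_subset_Icc_self ht) x hx
    rw [Real.dist_eq, Real.dist_eq] at this
    rw [← mul_pow, hg, sq_le_sq, abs_mul, NNReal.abs_eq]
    exact this
  set P : ℝ → ℝ := abelInt ν g with hP
  have hPeq : ∀ σ ∈ Icc 0 T,
      P σ = v t ^ 2 * (σ ^ ν / ν) - 2 * v t * abelInt ν v σ + abelInt ν (fun x => v x ^ 2) σ := by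
    intro σ hσ
    have i1 := intervalIntegrable_kernel hν0 0 σ σ
    have i2 := intervalIntegrable_kernel_mul hν0 hvc σ h0T hσ
    have i3 := intervalIntegrable_kernel_mul hν0 (v := fun x => v x ^ 2) (hvc.pow 2) σ h0T hσ
    have e1 := integral_kernel hν0 0 σ
    rw [sub_zero] at e1
    simp only [hP, abelInt]
    rw [← e1, ← intervalIntegral.integral_const_mul, ← intervalIntegral.integral_const_mul,
      ← intervalIntegral.integral_sub (i1.const_mul _) (i2.const_mul _),
      ← intervalIntegral.integral_add ((i1.const_mul _).sub (i2.const_mul _)) i3]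
    refine intervalIntegral.integral_congr fun x _ => ?_
    simp only [hg]
    ring
  have hPd : HasDerivAt P (v t ^ 2 * t ^ (ν - 1) - 2 * v t * A + B) t := by
    have hpow : HasDerivAt (fun σ : ℝ => v t ^ 2 * (σ ^ ν / ν)) (v t ^ 2 * t ^ (ν - 1)) t := by
      have := ((Real.hasDerivAt_rpow_const (x := t) (p := ν) (Or.inl ht.1.ne')).div_const
        ν).const_mul (v t ^ 2)
      rwa [mul_div_cancel_left₀ _ hν0.ne'] at this
    refine ((hpow.sub (hA.const_mul (2 * v t))).add hB).congr_of_eventuallyEq ?_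
    filter_upwards [Ioo_mem_nhds ht.1 ht.2] with σ hσ using hPeq σ (Ioo_subset_Icc_self hσ)
  -- As the kernel decreases, the increment of `P` over `[s, t]` is at most the integral over `[s, t]`
  -- alone, which is `o(t - s)` because `g x = O((t - x)²)`.
  have hinc : ∀ s ∈ Ioo 0 t, P t - P s ≤ K ^ 2 * (t - s) ^ 2 * (T ^ ν / ν) := by
    intro s hs
    have hsT : s ∈ Icc 0 T := ⟨hs.1.le, (hs.2.trans ht.2).le⟩
    have htT : t ∈ Icc 0 T := Ioo_subset_Icc_self ht
    have j1 := intervalIntegrable_kernel_mul hν0 hgc t h0T hsT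
    have j2 := intervalIntegrable_kernel_mul hν0 hgc t hsT htT
    have j3 := intervalIntegrable_kernel_mul hν0 hgc s h0T hsT
    have m1 : ∫ x in (0 : ℝ)..s, (t - x) ^ (ν - 1) * g x
        ≤ ∫ x in (0 : ℝ)..s, (s - x) ^ (ν - 1) * g x := by
      refine intervalIntegral.integral_mono_on_of_le_Ioo hs.1.le j1 j3 fun x hx => ?_
      exact mul_le_mul_of_nonneg_right (Real.rpow_le_rpow_of_nonpos (by linarith [hx.2])
        (by linarith [hs.2]) (by linarith)) (sq_nonneg _)
    have m2 : ∫ x in s..t, (t - x) ^ (ν - 1) * g x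
        ≤ ∫ x in s..t, (t - x) ^ (ν - 1) * (K ^ 2 * (t - s) ^ 2) := by
      refine intervalIntegral.integral_mono_on hs.2.le j2
        ((intervalIntegrable_kernel hν0 _ _ _).mul_const _) fun x hx => ?_
      refine mul_le_mul_of_nonneg_left ((hgK x ⟨hs.1.le.trans hx.1, hx.2.trans htT.2⟩).trans ?_)
        (Real.rpow_nonneg (by linarith [hx.2]) _)
      have : 0 ≤ t - x := by linarith [hx.2]
      gcongr
      exact hx.1
    rw [intervalIntegral.integral_mul_const, integral_kernel hν0] at m2
    have m3 : (t - s) ^ ν / ν ≤ T ^ ν / ν := by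
      have : 0 ≤ t - s := by linarith [hs.2]
      gcongr
      linarith [hs.1, ht.2]
    have m4 : P t = (∫ x in (0 : ℝ)..s, (t - x) ^ (ν - 1) * g x)
        + ∫ x in s..t, (t - x) ^ (ν - 1) * g x :=
      (intervalIntegral.integral_add_adjacent_intervals j1 j2).symm
    have m5 : P s = ∫ x in (0 : ℝ)..s, (s - x) ^ (ν - 1) * g x := rfl
    have m6 := mul_le_mul_of_nonneg_right m3 (show 0 ≤ K ^ 2 * (t - s) ^ 2 by positivity)
    linarith
  have hslope : Tendsto (slope P t) (𝓝[<] t) (𝓝 (v t ^ 2 * t ^ (ν - 1) - 2 * v t * A + B)) :=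
    (hasDerivWithinAt_iff_tendsto_slope' self_notMem_Iio).1 hPd.hasDerivWithinAt
  have hlim : Tendsto (fun s => K ^ 2 * (t - s) * (T ^ ν / ν)) (𝓝[<] t) (𝓝 0) := by
    have : Continuous fun s => K ^ 2 * (t - s) * (T ^ ν / ν) := by fun_prop
    simpa using (this.tendsto t).mono_left nhdsWithin_le_nhds
  have hle := le_of_tendsto_of_tendsto hslope hlim (by
    filter_upwards [Ioo_mem_nhdsLT ht.1] with s hs
    have hts : 0 < t - s := sub_pos.2 hs.2
    rw [slope_comm, slope_def_field, div_le_iff₀ hts]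
    refine (hinc s hs).trans (le_of_eq ?_)
    ring)
  linarith

/-- Midpoint convexity of `x ↦ x ^ p` on the positive reals for `p ≤ 0`. -/
lemma two_mul_rpow_half_le {p : ℝ} (hp : p ≤ 0) {a b : ℝ} (ha : 0 < a) (hb : 0 < b) :
    2 * ((a + b) / 2) ^ p ≤ a ^ p + b ^ p := by
  have hsq : ∀ {x : ℝ}, 0 < x → x ^ p = (x ^ (p / 2)) ^ 2 := fun {x} hx => by
    rw [← Real.rpow_natCast, ← Real.rpow_mul hx.le]; congr 1; push_cast; ring
  have h1 : ((a + b) / 2) ^ p ≤ a ^ (p / 2) * b ^ (p / 2) := by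
    rw [hsq (by positivity), ← Real.mul_rpow ha.le hb.le, sq,
      ← Real.mul_rpow (by positivity) (by positivity)]
    exact Real.rpow_le_rpow_of_nonpos (by positivity) (by nlinarith [sq_nonneg (a - b)])
      (by linarith)
  rw [hsq ha, hsq hb]
  nlinarith [sq_nonneg (a ^ (p / 2) - b ^ (p / 2))]

/-- Coercivity with the constant `ω_ν(T / 2)`, up to the factor `Γ(ν)`. -/
lemma abelInt_coercive {ν : ℝ} (hν0 : 0 < ν) (hν1 : ν < 1) {T : ℝ} (hT : 0 < T) {v : ℝ → ℝ}
    {K : NNReal} (hv : LipschitzOnWith K v (Icc 0 T)) :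
    (T / 2) ^ (ν - 1) * ∫ t in (0 : ℝ)..T, v t ^ 2
      ≤ ∫ t in (0 : ℝ)..T, deriv (abelInt ν v) t * v t := by
  have hvc := hv.continuousOn
  have h0T : (0 : ℝ) ∈ Icc 0 T := ⟨le_rfl, hT.le⟩
  have hTT : T ∈ Icc 0 T := ⟨hT.le, le_rfl⟩
  obtain ⟨K', hv2⟩ : ∃ K', LipschitzOnWith K' (fun x => v x ^ 2) (Icc 0 T) := by
    obtain ⟨M, hM⟩ := isCompact_Icc.exists_bound_of_continuousOn hvc
    refine ⟨(2 * M).toNNReal * K, LipschitzOnWith.of_dist_le_mul fun x hx y hy => ?_⟩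
    have hM0 : 0 ≤ M := (norm_nonneg _).trans (hM x hx)
    have hd := hv.dist_le_mul x hx y hy
    rw [NNReal.coe_mul, Real.coe_toNNReal _ (by linarith), mul_assoc]
    rw [Real.dist_eq, sq_sub_sq, abs_mul]
    refine mul_le_mul ?_ hd (abs_nonneg _) (by linarith)
    have h1 := hM x hx
    have h2 := hM y hy
    rw [Real.norm_eq_abs] at h1 h2
    linarith [abs_add_le (v x) (v y)]
  obtain ⟨hd1, hi1, -⟩ := abelInt_deriv hν0 hT hv
  obtain ⟨hd2, hi2, hint⟩ := abelInt_deriv hν0 hT hv2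
  have hvc' : ContinuousOn v (uIcc 0 T) := by rwa [uIcc_of_le hT.le]
  have hk : IntervalIntegrable (fun t : ℝ => t ^ (ν - 1) * v t ^ 2) volume 0 T :=
    (intervalIntegral.intervalIntegrable_rpow' (by linarith)).mul_continuousOn (hvc'.pow 2)
  have hk' := intervalIntegrable_kernel_mul hν0 (v := fun x => v x ^ 2) (hvc.pow 2) T h0T hTT
  -- The integral of `deriv (abelInt ν v²)` is `∫ (T - t)^(ν-1) v(t)²`, which symmetrises the weight
  -- `t^(ν-1)` of the other term about `T / 2`.
  have step1 : ∫ t in (0 : ℝ)..T,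
        (t ^ (ν - 1) * v t ^ 2 + deriv (abelInt ν fun x => v x ^ 2) t)
      ≤ ∫ t in (0 : ℝ)..T, 2 * (deriv (abelInt ν v) t * v t) := by
    refine intervalIntegral.integral_mono_ae_restrict hT.le (hk.add hi2)
      ((hi1.mul_continuousOn hvc').const_mul 2) ?_
    rw [← Measure.restrict_congr_set Ioo_ae_eq_Icc]
    refine (ae_restrict_iff' measurableSet_Ioo).2 ?_
    filter_upwards [hd1, hd2] with t h1 h2 ht
    exact deriv_abelInt_sq_le hν0 hν1 hv ht (h1 ht).hasDerivAt (h2 ht).hasDerivAt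
  rw [intervalIntegral.integral_add hk hi2, hint, intervalIntegral.integral_const_mul, abelInt,
    ← intervalIntegral.integral_add hk hk'] at step1
  have step2 : ∫ t in (0 : ℝ)..T, 2 * (T / 2) ^ (ν - 1) * v t ^ 2
      ≤ ∫ t in (0 : ℝ)..T, (t ^ (ν - 1) * v t ^ 2 + (T - t) ^ (ν - 1) * v t ^ 2) := by
    refine intervalIntegral.integral_mono_on_of_le_Ioo hT.le
      ((hvc'.pow 2).intervalIntegrable.const_mul _) (hk.add hk') fun t ht => ?_
    have := two_mul_rpow_half_le (p := ν - 1) (by linarith) ht.1 (sub_pos.2 ht.2)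
    rw [add_sub_cancel] at this
    rw [← add_mul]
    exact mul_le_mul_of_nonneg_right this (sq_nonneg _)
  rw [intervalIntegral.integral_const_mul] at step2
  linarith

end Auxiliary

/-- **Coercivity of the Riemann–Liouville operator (Appendix A).**
For `0 < ν < 1` and piecewise-`C¹` `v`,
`∫_0^T 𝓑v(t) v(t) dt ≥ ρ_ν T^{ν−1} ∫_0^T v(t)² dt`, where
`𝓑v(t) = (d/dt)∫_0^t ω_ν(t−s) v(s) ds` and
`ρ_ν = π^{1−ν} (1−ν)^{1−ν}/(2−ν)^{2−ν} sin(πν/2)`. -/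
theorem riemann_liouville_lower_bound
    (ν : ℝ) (hν0 : 0 < ν) (hν1 : ν < 1)
    (T : ℝ) (hT : 0 < T)
    (v : ℝ → ℝ) (hv : PiecewiseC1On v T) :
    (π ^ (1 - ν) * ((1 - ν) ^ (1 - ν) / (2 - ν) ^ (2 - ν)) * Real.sin (π * ν / 2))
        * T ^ (ν - 1) * ∫ s in (0 : ℝ)..T, (v s) ^ 2
      ≤ ∫ s in (0 : ℝ)..T,
          (deriv (fun σ => ∫ x in (0 : ℝ)..σ, ((σ - x) ^ (ν - 1) / Real.Gamma ν) * v x) s)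
            * v s := by
  obtain ⟨K, hK⟩ := hv.exists_lipschitzOnWith
  have hG : 0 < Real.Gamma ν := Real.Gamma_pos_of_pos hν0
  have hfun : (fun σ => ∫ x in (0 : ℝ)..σ, ((σ - x) ^ (ν - 1) / Real.Gamma ν) * v x)
      = fun σ => abelInt ν v σ / Real.Gamma ν := by
    funext σ
    rw [abelInt, ← intervalIntegral.integral_div]
    refine intervalIntegral.integral_congr fun x _ => ?_
    ring
  have hI : 0 ≤ ∫ s in (0 : ℝ)..T, v s ^ 2 :=
    intervalIntegral.integral_nonneg hT.le fun s _ => sq_nonneg _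
  have hpow : 2 ^ (1 - ν) * T ^ (ν - 1) = (T / 2) ^ (ν - 1) := by
    rw [Real.div_rpow hT.le zero_le_two, show 1 - ν = -(ν - 1) by ring,
      Real.rpow_neg zero_le_two]
    ring
  calc _ ≤ 2 ^ (1 - ν) / Real.Gamma ν * T ^ (ν - 1) * ∫ s in (0 : ℝ)..T, v s ^ 2 := by
        gcongr
        exact rho_le hν0 hν1
    _ = ((T / 2) ^ (ν - 1) * ∫ s in (0 : ℝ)..T, v s ^ 2) / Real.Gamma ν := by
        rw [← hpow]; ring
    _ ≤ (∫ t in (0 : ℝ)..T, deriv (abelInt ν v) t * v t) / Real.Gamma ν := by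
        gcongr
        exact abelInt_coercive hν0 hν1 hT hK
    _ = _ := by
        rw [hfun, ← intervalIntegral.integral_div]
        refine intervalIntegral.integral_congr fun s _ => ?_
        simp only [deriv_div_const]
        ring
end

section
/- For every real sequence V = (V^1, ..., V^N), Σ_{n=1}^N k_n (𝔅̄^n V) V^n ≥ ρ_ν T^{ν−1} Σ_{n=1}^N k_n (V^n)^2, where 𝔅̄^n V = k_n^{-1}( β_nn V^n − Σ_{j=1}^{n-1} β_nj V^j ); equivalently, Σ_{n=1}^N ( β_nn (V^n)^2 − Σ_{j=1}^{n-1} β_nj V^j V^n ) ≥ ρ_ν T^{ν−1} Σ_{n=1}^N k_n (V^n)^2. -/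
/-!
The form `∑ₙ (βₙₙ (Vⁿ)² - ∑_{j<n} βₙⱼ Vʲ Vⁿ)` to be bounded below is the positive semidefinite form
attached to the conditionally negative definite kernel `|x| ^ ν`.
Write `Q φ` (`cellForm`) for the form whose matrix entries are the second differences of the even
function `φ` over the cells `Iₙ × Iⱼ`. Integrating the weights explicitly shows that the form to
be bounded equals
`Q (|·| ^ ν) / (2 Γ(1+ν))`, and `Q |·|` is twice the squared `L²` norm `S = ∑ kₙ (Vⁿ)²`.

The formula `∫₀^∞ (1 - cos (x y)) y ^ (-1-p) dy = K_p |x| ^ p`, with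
`K_p = π / (2 Γ(1+p) sin (πp/2))` and `0 < p < 2`, gives
`K_p * Q (|·| ^ p) = ∫₀^∞ W(y) y ^ (-1-p) dy`, where `W(y) = Q (1 - cos (· y))` is a sum of two
squares: it is `y²` times the squared modulus of the Fourier transform of the step function with
values `Vⁿ`. The case `p = 1` is Plancherel's identity for that step function, and `p = ν`
represents the form to be bounded. By Cauchy-Schwarz `W(y) ≤ y² T S`, so frequencies below a
cutoff `ε` carry at most `ε T S` of the total `∫ W(y) y⁻² dy = π S`, while above it
`y ^ (1-ν) ≥ ε ^ (1-ν)`. Hence `∫ W(y) y ^ (-1-ν) dy ≥ ε ^ (1-ν) (π - ε T) S`, and the maximising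
choice `ε = π (1-ν) / ((2-ν) T)` produces the constant `ρ`.
-/

open Real

/-! ### The constant in the integral representation of `|x| ^ p` -/

open Set MeasureTheory in
/-- Tonelli's theorem on the open quadrant for a nonnegative integrand, phrased with the two
iterated integrals `g` and `h` given by closed formulas: integrability of `h` yields that of `g`. -/
lemma tonelli_Ioi {f : ℝ → ℝ → ℝ} {g h : ℝ → ℝ} (hf : Measurable (Function.uncurry f))
    (hpos : ∀ x, 0 < x → ∀ y, 0 < y → 0 ≤ f x y)
    (hg : ∀ x, 0 < x → ∫ y in Ioi 0, f x y = g x)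
    (hh : ∀ y, 0 < y → IntegrableOn (fun x => f x y) (Ioi 0) ∧ ∫ x in Ioi 0, f x y = h y)
    (hI : IntegrableOn h (Ioi 0)) :
    IntegrableOn g (Ioi 0) ∧ ∫ x in Ioi 0, g x = ∫ y in Ioi 0, h y := by
  have hint : Integrable (Function.uncurry f)
      ((volume.restrict (Ioi (0 : ℝ))).prod (volume.restrict (Ioi (0 : ℝ)))) := by
    rw [integrable_prod_iff' hf.aestronglyMeasurable]
    constructor
    · filter_upwards [ae_restrict_mem measurableSet_Ioi] with y hy
      exact (hh y hy).1
    · refine Integrable.congr hI ?_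
      filter_upwards [ae_restrict_mem measurableSet_Ioi] with y hy
      rw [← (hh y hy).2]
      refine setIntegral_congr_fun measurableSet_Ioi fun x hx => ?_
      exact (Real.norm_of_nonneg (hpos x hx y hy)).symm
  have hgae : (fun x => ∫ y in Ioi 0, f x y) =ᵐ[volume.restrict (Ioi (0 : ℝ))] g := by
    filter_upwards [ae_restrict_mem measurableSet_Ioi] with x hx using hg x hx
  refine ⟨Integrable.congr hint.integral_prod_left hgae, ?_⟩
  rw [← integral_congr_ae hgae, integral_integral_swap hint]
  exact setIntegral_congr_fun measurableSet_Ioi fun y hy => (hh y hy).2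

open Set MeasureTheory in
/-- Obtained by writing `1 / (1 + s²) = ∫ exp (-(1 + s²) x) dx`, exchanging the integrals, and
applying the reflection formula to `Γ(p/2) Γ(1 - p/2)`. -/
lemma integral_rpow_div_one_add_sq {p : ℝ} (hp0 : 0 < p) (hp2 : p < 2) :
    IntegrableOn (fun s : ℝ => s ^ (p - 1) / (1 + s ^ 2)) (Ioi 0) ∧
      ∫ s in Ioi (0 : ℝ), s ^ (p - 1) / (1 + s ^ 2) = π / (2 * sin (π * p / 2)) := by
  have hG := Real.Gamma_mul_Gamma_one_sub (p / 2)
  have key := tonelli_Ioi (f := fun s x => s ^ (p - 1) * exp (-((1 + s ^ 2) * x)))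
    (g := fun s => s ^ (p - 1) / (1 + s ^ 2))
    (h := fun x => (Gamma (p / 2) / 2) * (x ^ (-(p / 2)) * exp (-1 * x ^ (1 : ℝ))))
    (by unfold Function.uncurry; fun_prop)
    (fun s hs x _ => by positivity)
    (fun s hs => ?_) (fun x hx => ⟨?_, ?_⟩) ?_
  · refine ⟨key.1, key.2.trans ?_⟩
    rw [integral_const_mul, integral_rpow_mul_exp_neg_mul_rpow one_pos (by linarith) one_pos]
    rw [show π * p / 2 = π * (p / 2) by ring, show (-(p / 2) + 1) / 1 = 1 - p / 2 by ring]
    simp only [one_rpow, div_one, one_mul]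
    rw [← div_div, div_right_comm, ← hG]; ring
  · rw [integral_const_mul]
    have := integral_rpow_mul_exp_neg_mul_Ioi (a := 1) one_pos (r := 1 + s ^ 2) (by positivity)
    simp only [sub_self, rpow_zero, one_mul, rpow_one, Gamma_one, mul_one] at this
    rw [this]; ring
  · have := (integrableOn_rpow_mul_exp_neg_mul_rpow (p := 2) (s := p - 1) (b := x) (by linarith)
      two_pos hx).mul_const (exp (-x))
    refine IntegrableOn.congr_fun this (fun s _ => ?_) measurableSet_Ioi
    rw [mul_assoc, ← exp_add, rpow_two]; congr 2; ring
  · have : ∀ s : ℝ, s ^ (p - 1) * exp (-((1 + s ^ 2) * x))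
        = exp (-x) * (s ^ (p - 1) * exp (-x * s ^ (2 : ℝ))) := fun s => by
      rw [mul_left_comm, ← exp_add, rpow_two]; congr 2; ring
    simp_rw [this]
    rw [integral_const_mul, integral_rpow_mul_exp_neg_mul_rpow two_pos (by linarith) hx]
    simp only [sub_add_cancel, rpow_one]
    rw [neg_div]; ring_nf
  · exact (integrableOn_rpow_mul_exp_neg_mul_rpow (by linarith) one_pos one_pos).const_mul _

open Set MeasureTheory Filter Topology in
lemma integral_one_sub_cos_mul_exp {s : ℝ} (hs : 0 < s) :
    IntegrableOn (fun y : ℝ => (1 - cos y) * exp (-(y * s))) (Ioi 0) ∧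
      ∫ y in Ioi (0 : ℝ), (1 - cos y) * exp (-(y * s)) = 1 / (s * (1 + s ^ 2)) := by
  -- `F` is an antiderivative of the integrand that vanishes at infinity.
  set F : ℝ → ℝ := fun y =>
    exp (-(y * s)) * ((s * cos y - sin y) / (1 + s ^ 2) - 1 / s) with hF
  have hd : ∀ y ∈ Ici (0 : ℝ), HasDerivAt F ((1 - cos y) * exp (-(y * s))) y := by
    intro y _
    have h1 : HasDerivAt (fun y : ℝ => exp (-(y * s))) (exp (-(y * s)) * (-(1 * s))) y :=
      ((hasDerivAt_id y).mul_const s).neg.exp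
    have h2 : HasDerivAt (fun y : ℝ => (s * cos y - sin y) / (1 + s ^ 2) - 1 / s)
        ((s * (-sin y) - cos y) / (1 + s ^ 2)) y :=
      ((((hasDerivAt_cos y).const_mul s).sub (hasDerivAt_sin y)).div_const _).sub_const _
    convert! h1.mul h2 using 1
    have : 1 + s ^ 2 ≠ 0 := by positivity
    field_simp
    ring
  have hpos : ∀ y ∈ Ioi (0 : ℝ), 0 ≤ (1 - cos y) * exp (-(y * s)) := fun y _ =>
    mul_nonneg (by linarith [cos_le_one y]) (exp_pos _).le
  have hlim : Tendsto F atTop (𝓝 0) := by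
    have h1 : Tendsto (fun y : ℝ => exp (-(y * s))) atTop (𝓝 0) :=
      tendsto_exp_neg_atTop_nhds_zero.comp (tendsto_id.atTop_mul_const hs)
    refine h1.zero_mul_isBoundedUnder_le ?_
    refine isBoundedUnder_of ⟨(s + 1) / (1 + s ^ 2) + 1 / s, fun y => ?_⟩
    simp only [Function.comp, Real.norm_eq_abs]
    refine (abs_sub _ _).trans ?_
    rw [abs_div, abs_of_pos (show 0 < 1 + s ^ 2 by positivity), abs_of_pos (show 0 < 1 / s by positivity)]
    gcongr
    refine (abs_sub _ _).trans ?_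
    rw [abs_mul, abs_of_pos hs]
    have := abs_cos_le_one y
    have := abs_sin_le_one y
    nlinarith
  refine ⟨integrableOn_Ioi_deriv_of_nonneg' hd hpos hlim, ?_⟩
  rw [integral_Ioi_of_hasDerivAt_of_nonneg' hd hpos hlim]
  have : 1 + s ^ 2 ≠ 0 := by positivity
  simp only [hF, zero_mul, neg_zero, exp_zero, cos_zero, sin_zero]
  field_simp
  ring

open Set MeasureTheory in
/-- The constant `K_p`. It is obtained by inserting
`Γ(1+p) y ^ (-1-p) = ∫ s ^ p exp (-y s) ds` and exchanging the integrals. -/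
lemma integral_one_sub_cos_mul_rpow {p : ℝ} (hp0 : 0 < p) (hp2 : p < 2) :
    IntegrableOn (fun y : ℝ => (1 - cos y) * y ^ (-1 - p)) (Ioi 0) ∧
      ∫ y in Ioi (0 : ℝ), (1 - cos y) * y ^ (-1 - p)
        = π / (2 * Gamma (1 + p) * sin (π * p / 2)) := by
  obtain ⟨hI, hv⟩ := integral_rpow_div_one_add_sq hp0 hp2
  have hΓ : 0 < Gamma (1 + p) := Gamma_pos_of_pos (by linarith)
  have key := tonelli_Ioi
    (f := fun y s => (1 - cos y) * (s ^ (1 + p - 1) * exp (-(y * s))))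
    (g := fun y => (1 - cos y) * y ^ (-1 - p) * Gamma (1 + p))
    (h := fun s => s ^ (p - 1) / (1 + s ^ 2))
    (by unfold Function.uncurry; fun_prop)
    (fun y hy s hs => mul_nonneg (by linarith [cos_le_one y]) (by positivity))
    (fun y hy => ?_) (fun s hs => ?_) hI
  · have h1 := key.1.mul_const (Gamma (1 + p))⁻¹
    simp only [mul_assoc, mul_inv_cancel₀ hΓ.ne', mul_one] at h1
    refine ⟨h1, ?_⟩
    have h2 := key.2
    rw [integral_mul_const, hv] at h2
    rw [eq_div_of_mul_eq hΓ.ne' h2, div_div]; ring_nf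
  · rw [integral_const_mul, integral_rpow_mul_exp_neg_mul_Ioi (by linarith) hy,
      one_div, inv_rpow hy.le, ← rpow_neg hy.le]
    ring_nf
  · obtain ⟨h1, h2⟩ := integral_one_sub_cos_mul_exp hs
    have e : ∀ y : ℝ, (1 - cos y) * (s ^ (1 + p - 1) * exp (-(y * s)))
        = s ^ (1 + p - 1) * ((1 - cos y) * exp (-(y * s))) := fun y => by ring
    simp_rw [e]
    refine ⟨h1.const_mul _, ?_⟩
    rw [integral_const_mul, h2, add_sub_cancel_left, rpow_sub_one hs.ne']
    field_simp

open Set MeasureTheory in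
lemma integral_one_sub_cos_mul_rpow_scaled {p : ℝ} (hp0 : 0 < p) (hp2 : p < 2) (x : ℝ) :
    IntegrableOn (fun y : ℝ => (1 - cos (x * y)) * y ^ (-1 - p)) (Ioi 0) ∧
      ∫ y in Ioi (0 : ℝ), (1 - cos (x * y)) * y ^ (-1 - p)
        = π / (2 * Gamma (1 + p) * sin (π * p / 2)) * |x| ^ p := by
  obtain ⟨hI, hv⟩ := integral_one_sub_cos_mul_rpow hp0 hp2
  rcases eq_or_ne x 0 with rfl | hx
  · simp [zero_rpow hp0.ne']
  have ha : 0 < |x| := abs_pos.2 hx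
  have e : ∀ y ∈ Ioi (0 : ℝ), |x| ^ (1 + p) * ((1 - cos (|x| * y)) * (|x| * y) ^ (-1 - p))
      = (1 - cos (x * y)) * y ^ (-1 - p) := by
    intro y hy
    have hc : cos (|x| * y) = cos (x * y) := by
      rw [← cos_abs (x * y), abs_mul, abs_of_pos (show 0 < y from hy)]
    rw [hc, mul_rpow ha.le (le_of_lt hy), show -1 - p = -(1 + p) by ring, rpow_neg ha.le]
    field_simp
  have h1 := (integrableOn_Ioi_comp_mul_left_iff
    (fun y : ℝ => (1 - cos y) * y ^ (-1 - p)) 0 ha).2 (by simpa using hI)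
  refine ⟨IntegrableOn.congr_fun (h1.const_mul (|x| ^ (1 + p))) e measurableSet_Ioi, ?_⟩
  rw [← setIntegral_congr_fun measurableSet_Ioi e, integral_const_mul,
    integral_comp_mul_left_Ioi (fun y : ℝ => (1 - cos y) * y ^ (-1 - p)) 0 ha, mul_zero, hv,
    rpow_add ha, rpow_one, smul_eq_mul]
  field_simp

/-! ### The quadratic form of second differences -/

/-- The second difference of `φ` over the cell `Iₙ × Iⱼ`. For smooth `φ` it equals
`∫∫ φ''(x - y) dy dx` over the cell; for `φ = |·|` it is `2 kₙ` when `n = j` and `0` otherwise.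
Truncated subtraction is harmless because the indices used are at least `1`. -/
noncomputable def cellDiff (t : ℕ → ℝ) (φ : ℝ → ℝ) (n j : ℕ) : ℝ :=
  φ (t n - t (j - 1)) - φ (t n - t j) - φ (t (n - 1) - t (j - 1)) + φ (t (n - 1) - t j)

/-- The quadratic form in `V` with matrix `cellDiff t φ`. For `φ = |·| ^ ν` it is
`2 Γ(1+ν)` times the form to be bounded. -/
noncomputable def cellForm (t : ℕ → ℝ) (V : ℕ → ℝ) (N : ℕ) (φ : ℝ → ℝ) : ℝ :=
  ∑ n ∈ Finset.Icc 1 N, ∑ j ∈ Finset.Icc 1 N, cellDiff t φ n j * (V n * V j)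

lemma cellDiff_comm (t : ℕ → ℝ) {φ : ℝ → ℝ} (hφ : ∀ x, φ (-x) = φ x) (n j : ℕ) :
    cellDiff t φ n j = cellDiff t φ j n := by
  unfold cellDiff
  rw [← hφ (t n - t (j - 1)), ← hφ (t n - t j), ← hφ (t (n - 1) - t (j - 1)),
    ← hφ (t (n - 1) - t j)]
  simp only [neg_sub]
  ring

lemma sum_sum_symm (M : ℕ → ℕ → ℝ) (hM : ∀ n j, M n j = M j n) (V : ℕ → ℝ) (N : ℕ) :
    ∑ n ∈ Finset.Icc 1 N, ∑ j ∈ Finset.Icc 1 N, M n j * (V n * V j)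
      = ∑ n ∈ Finset.Icc 1 N,
          (M n n * V n ^ 2 + 2 * ∑ j ∈ Finset.Icc 1 (n - 1), M n j * (V n * V j)) := by
  induction N with
  | zero => simp
  | succ N ih =>
    rw [Finset.sum_Icc_succ_top (by omega),
      Finset.sum_Icc_succ_top (f := fun n => M n n * V n ^ 2 + _) (by omega), ← ih]
    simp_rw [Finset.sum_Icc_succ_top (show 1 ≤ N + 1 by omega)]
    rw [Finset.sum_add_distrib, Nat.add_sub_cancel]
    have : ∑ i ∈ Finset.Icc 1 N, M i (N + 1) * (V i * V (N + 1))
        = ∑ i ∈ Finset.Icc 1 N, M (N + 1) i * (V (N + 1) * V i) :=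
      Finset.sum_congr rfl fun i _ => by rw [hM i (N + 1), mul_comm (V i)]
    rw [this]
    ring

lemma cellForm_eq (t : ℕ → ℝ) (V : ℕ → ℝ) (N : ℕ) {φ : ℝ → ℝ} (hφ : ∀ x, φ (-x) = φ x) :
    cellForm t V N φ = ∑ n ∈ Finset.Icc 1 N, (cellDiff t φ n n * V n ^ 2
      + 2 * ∑ j ∈ Finset.Icc 1 (n - 1), cellDiff t φ n j * (V n * V j)) :=
  sum_sum_symm _ (cellDiff_comm t hφ) V N

/-- The form of `1 - cos (· y)` is the squared modulus of
`∑ Vⁿ (exp (i tₙ y) - exp (i tₙ₋₁ y))`; in particular it is nonnegative. -/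
lemma cellForm_cos (t V : ℕ → ℝ) (N : ℕ) (y : ℝ) :
    cellForm t V N (fun x => 1 - cos (x * y))
      = (∑ n ∈ Finset.Icc 1 N, V n * (cos (t n * y) - cos (t (n - 1) * y))) ^ 2
        + (∑ n ∈ Finset.Icc 1 N, V n * (sin (t n * y) - sin (t (n - 1) * y))) ^ 2 := by
  unfold cellForm cellDiff
  rw [sq, sq, Finset.sum_mul_sum, Finset.sum_mul_sum, ← Finset.sum_add_distrib]
  refine Finset.sum_congr rfl fun n _ => ?_
  rw [← Finset.sum_add_distrib]
  refine Finset.sum_congr rfl fun j _ => ?_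
  simp only [sub_mul, cos_sub]
  ring

/-- Cauchy-Schwarz with weights `kₙ`, together with
`|exp (i tₙ y) - exp (i tₙ₋₁ y)|² = 2 - 2 cos (kₙ y) ≤ (kₙ y)²`. -/
lemma cellForm_cos_le {t : ℕ → ℝ} {N : ℕ} (ht : ∀ n ∈ Finset.Icc 1 N, t (n - 1) < t n)
    (V : ℕ → ℝ) (y : ℝ) :
    cellForm t V N (fun x => 1 - cos (x * y))
      ≤ y ^ 2 * (∑ n ∈ Finset.Icc 1 N, (t n - t (n - 1)))
        * ∑ n ∈ Finset.Icc 1 N, (t n - t (n - 1)) * V n ^ 2 := by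
  have hk : ∀ n ∈ Finset.Icc 1 N, 0 < t n - t (n - 1) := fun n hn => sub_pos.2 (ht n hn)
  have cs : ∀ c : ℕ → ℝ, (∑ n ∈ Finset.Icc 1 N, V n * c n) ^ 2
      ≤ (∑ n ∈ Finset.Icc 1 N, (t n - t (n - 1)) * V n ^ 2)
        * ∑ n ∈ Finset.Icc 1 N, c n ^ 2 / (t n - t (n - 1)) := fun c => by
    refine Finset.sum_sq_le_sum_mul_sum_of_sq_le_mul _ (fun n hn => ?_) (fun n hn => ?_)
      (fun n hn => ?_)
    · have := hk n hn; positivity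
    · have := hk n hn; positivity
    · have := (hk n hn).ne'
      exact le_of_eq (by field_simp)
  rw [cellForm_cos]
  refine (add_le_add (cs _) (cs _)).trans ?_
  rw [← mul_add, ← Finset.sum_add_distrib, mul_comm,
    Finset.mul_sum (s := Finset.Icc 1 N) (a := y ^ 2)]
  have hS : 0 ≤ ∑ n ∈ Finset.Icc 1 N, (t n - t (n - 1)) * V n ^ 2 :=
    Finset.sum_nonneg fun n hn => by have := hk n hn; positivity
  refine mul_le_mul_of_nonneg_right (Finset.sum_le_sum fun n hn => ?_) hS
  rw [← add_div, div_le_iff₀ (hk n hn)]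
  have h1 := one_sub_sq_div_two_le_cos (x := (t n - t (n - 1)) * y)
  rw [sub_mul, cos_sub] at h1
  nlinarith [sin_sq_add_cos_sq (t n * y), sin_sq_add_cos_sq (t (n - 1) * y)]

open Set MeasureTheory in
/-- Spectral representation of the form of `|·| ^ p`; for `p = 1` this is Plancherel's identity
for the step function with values `Vⁿ`. -/
lemma integral_cellForm_cos {p : ℝ} (hp0 : 0 < p) (hp2 : p < 2) (t V : ℕ → ℝ) (N : ℕ) :
    IntegrableOn (fun y : ℝ => cellForm t V N (fun x => 1 - cos (x * y)) * y ^ (-1 - p)) (Ioi 0) ∧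
      ∫ y in Ioi (0 : ℝ), cellForm t V N (fun x => 1 - cos (x * y)) * y ^ (-1 - p)
        = π / (2 * Gamma (1 + p) * sin (π * p / 2)) * cellForm t V N (fun x => |x| ^ p) := by
  have h := integral_one_sub_cos_mul_rpow_scaled hp0 hp2
  have e : ∀ y : ℝ, cellForm t V N (fun x => 1 - cos (x * y)) * y ^ (-1 - p)
      = ∑ n ∈ Finset.Icc 1 N, ∑ j ∈ Finset.Icc 1 N,
        ((1 - cos ((t n - t (j - 1)) * y)) * y ^ (-1 - p)
          - (1 - cos ((t n - t j) * y)) * y ^ (-1 - p)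
          - (1 - cos ((t (n - 1) - t (j - 1)) * y)) * y ^ (-1 - p)
          + (1 - cos ((t (n - 1) - t j) * y)) * y ^ (-1 - p)) * (V n * V j) := fun y => by
    unfold cellForm cellDiff
    simp_rw [Finset.sum_mul]
    refine Finset.sum_congr rfl fun n _ => Finset.sum_congr rfl fun j _ => by ring
  have hi : ∀ n j : ℕ, IntegrableOn (fun y : ℝ =>
        ((1 - cos ((t n - t (j - 1)) * y)) * y ^ (-1 - p)
          - (1 - cos ((t n - t j) * y)) * y ^ (-1 - p)
          - (1 - cos ((t (n - 1) - t (j - 1)) * y)) * y ^ (-1 - p)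
          + (1 - cos ((t (n - 1) - t j) * y)) * y ^ (-1 - p)) * (V n * V j)) (Ioi 0) := fun n j =>
    (((((h _).1.sub (h _).1).sub (h _).1).add (h _).1).mul_const _)
  simp_rw [e]
  refine ⟨integrable_finsetSum _ fun n _ => integrable_finsetSum _ fun j _ => hi n j, ?_⟩
  rw [integral_finsetSum _ fun n _ => integrable_finsetSum _ fun j _ => hi n j]
  unfold cellForm cellDiff
  rw [Finset.mul_sum]
  refine Finset.sum_congr rfl fun n _ => ?_
  rw [integral_finsetSum _ fun j _ => hi n j, Finset.mul_sum]
  refine Finset.sum_congr rfl fun j _ => ?_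
  have lin : ∀ a b c d : ℝ, ∫ y in Ioi (0 : ℝ),
      ((1 - cos (a * y)) * y ^ (-1 - p) - (1 - cos (b * y)) * y ^ (-1 - p)
        - (1 - cos (c * y)) * y ^ (-1 - p) + (1 - cos (d * y)) * y ^ (-1 - p))
      = π / (2 * Gamma (1 + p) * sin (π * p / 2)) * (|a| ^ p - |b| ^ p - |c| ^ p + |d| ^ p) := by
    intro a b c d
    refine (integral_add (((h a).1.sub (h b).1).sub (h c).1) (h d).1).trans ?_
    rw [integral_sub' ((h a).1.sub (h b).1) (h c).1, integral_sub' (h a).1 (h b).1,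
      (h a).2, (h b).2, (h c).2, (h d).2]
    ring
  rw [integral_mul_const, lin]
  ring

/-- The kernel `|x|` is affine on each cell off the diagonal, so only the diagonal contributes. -/
lemma cellForm_abs {t : ℕ → ℝ} {N : ℕ} (ht : ∀ n ∈ Finset.Icc 1 N, t (n - 1) < t n)
    (hle : ∀ j n, j ≤ n → n ≤ N → t j ≤ t n) (V : ℕ → ℝ) :
    cellForm t V N (fun x => |x| ^ (1 : ℝ))
      = 2 * ∑ n ∈ Finset.Icc 1 N, (t n - t (n - 1)) * V n ^ 2 := by
  rw [cellForm_eq t V N (by simp), Finset.mul_sum]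
  refine Finset.sum_congr rfl fun n hn => ?_
  obtain ⟨hn1, hnN⟩ := Finset.mem_Icc.1 hn
  rw [Finset.sum_eq_zero]
  · have := ht n hn
    simp only [cellDiff, rpow_one, sub_self, abs_zero]
    rw [abs_sub_comm (t (n - 1)), abs_of_pos (sub_pos.2 this)]
    ring
  · intro j hj
    obtain ⟨hj1, hjn⟩ := Finset.mem_Icc.1 hj
    have h1 := hle j (n - 1) hjn (by omega)
    have h2 := hle (j - 1) (n - 1) (by omega) (by omega)
    have h3 := hle (n - 1) n (by omega) hnN
    simp only [cellDiff, rpow_one]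
    rw [abs_of_nonneg (by linarith), abs_of_nonneg (by linarith), abs_of_nonneg (by linarith),
      abs_of_nonneg (by linarith)]
    ring

/-! ### The frequency cutoff and the optimal constant -/

open Set MeasureTheory in
/-- Frequencies in `(0, ε]` carry at most `ε * C` of `∫ W y⁻²`, and above `ε` the weight
`y ^ (-1-ν)` dominates `ε ^ (1-ν) y⁻²`. -/
lemma integral_cutoff {W : ℝ → ℝ} {ν ε C : ℝ} (hν1 : ν < 1) (hε : 0 < ε)
    (hW0 : ∀ y, 0 ≤ W y) (hWC : ∀ y, W y ≤ y ^ 2 * C)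
    (h1 : IntegrableOn (fun y => W y * y ^ (-1 - ν)) (Ioi 0))
    (h2 : IntegrableOn (fun y => W y * y ^ (-1 - (1 : ℝ))) (Ioi 0)) :
    ε ^ (1 - ν) * ((∫ y in Ioi (0 : ℝ), W y * y ^ (-1 - (1 : ℝ))) - ε * C)
      ≤ ∫ y in Ioi (0 : ℝ), W y * y ^ (-1 - ν) := by
  have hind : IntegrableOn ((Ioc 0 ε).indicator fun _ => C) (Ioi (0 : ℝ)) :=
    ((integrable_indicator_iff measurableSet_Ioc).2 (by simp)).integrableOn
  have hv : ∫ y in Ioi (0 : ℝ), (Ioc 0 ε).indicator (fun _ => C) y = ε * C := by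
    rw [setIntegral_indicator measurableSet_Ioc, inter_eq_self_of_subset_right Ioc_subset_Ioi_self]
    simp [hε.le]
  rw [← hv, ← integral_sub h2 hind, ← integral_const_mul]
  refine setIntegral_mono_on ((h2.sub hind).const_mul _) h1 measurableSet_Ioi fun y hy => ?_
  have hy : 0 < y := hy
  have e : y ^ (-1 - ν) = y ^ (1 - ν) * y ^ (-1 - (1 : ℝ)) := by
    rw [← rpow_add hy]; ring_nf
  have hε' : 0 < ε ^ (1 - ν) := rpow_pos_of_pos hε _
  have hWy : 0 ≤ W y * y ^ (-1 - (1 : ℝ)) := mul_nonneg (hW0 y) (rpow_nonneg hy.le _)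
  rw [e, mul_left_comm]
  by_cases hyε : y ≤ ε
  · rw [indicator_of_mem (show y ∈ Ioc 0 ε from ⟨hy, hyε⟩)]
    have : W y * y ^ (-1 - (1 : ℝ)) ≤ C := by
      rw [show (-1 - (1 : ℝ)) = -2 by norm_num, rpow_neg hy.le, rpow_two, ← div_eq_mul_inv,
        div_le_iff₀ (by positivity), mul_comm]
      exact hWC y
    exact (mul_nonpos_of_nonneg_of_nonpos hε'.le (by linarith)).trans
      (mul_nonneg (rpow_nonneg hy.le _) hWy)
  · rw [indicator_of_notMem (fun h : y ∈ Ioc 0 ε => hyε h.2), sub_zero]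
    push Not at hyε
    exact mul_le_mul_of_nonneg_right (rpow_le_rpow hε.le hyε.le (by linarith)) hWy

lemma cellForm_lower_bound {ν T : ℝ} (hν0 : 0 < ν) (hν1 : ν < 1) (hT : 0 < T)
    {t : ℕ → ℝ} {N : ℕ} (ht : ∀ n ∈ Finset.Icc 1 N, t (n - 1) < t n)
    (hle : ∀ j n, j ≤ n → n ≤ N → t j ≤ t n)
    (hsum : ∑ n ∈ Finset.Icc 1 N, (t n - t (n - 1)) = T) (V : ℕ → ℝ) :
    π ^ (1 - ν) * ((1 - ν) ^ (1 - ν) / (2 - ν) ^ (2 - ν)) * sin (π * ν / 2) * T ^ (ν - 1)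
        * ∑ n ∈ Finset.Icc 1 N, (t n - t (n - 1)) * V n ^ 2
      ≤ cellForm t V N (fun x => |x| ^ ν) / (2 * Gamma (1 + ν)) := by
  set S := ∑ n ∈ Finset.Icc 1 N, (t n - t (n - 1)) * V n ^ 2 with hS
  obtain ⟨i1, v1⟩ := integral_cellForm_cos hν0 (by linarith) t V N
  obtain ⟨i2, v2⟩ := integral_cellForm_cos one_pos one_lt_two t V N
  have ha : 0 < 1 - ν := by linarith
  have hb : 0 < 2 - ν := by linarith
  have hΓ : 0 < Gamma (1 + ν) := Gamma_pos_of_pos (by linarith)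
  have hsin : 0 < sin (π * ν / 2) :=
    sin_pos_of_pos_of_lt_pi (by positivity) (by nlinarith [pi_pos])
  -- This cutoff maximises `ε ^ (1-ν) * (π - ε * T)`.
  have key := integral_cutoff (ε := π * (1 - ν) / ((2 - ν) * T)) (C := T * S) hν1
    (by positivity) (fun y => by rw [cellForm_cos]; positivity)
    (fun y => by
      have := cellForm_cos_le ht V y
      rwa [hsum, mul_assoc] at this) i1 i2
  rw [v1, v2, cellForm_abs ht hle, ← hS] at key
  have hG2 : Gamma (1 + 1) = 1 := by norm_num
  rw [hG2, mul_one π, sin_pi_div_two] at key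
  have e1 : (π * (1 - ν) / ((2 - ν) * T)) ^ (1 - ν)
      = π ^ (1 - ν) * (1 - ν) ^ (1 - ν) / ((2 - ν) ^ (1 - ν)) * T ^ (ν - 1) := by
    rw [div_rpow (by positivity) (by positivity), mul_rpow pi_pos.le ha.le,
      mul_rpow hb.le hT.le, show ν - 1 = -(1 - ν) by ring, rpow_neg hT.le]
    field_simp
  have e2 : (2 - ν) ^ (2 - ν) = (2 - ν) ^ (1 - ν) * (2 - ν) := by
    rw [← rpow_add_one hb.ne']; ring_nf
  have e3 : π / (2 * 1 * 1) * (2 * S) - π * (1 - ν) / ((2 - ν) * T) * (T * S)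
      = π * S / (2 - ν) := by
    field_simp; ring
  rw [e1, e3] at key
  rw [e2]
  have hfac : 0 < sin (π * ν / 2) / π := by positivity
  calc _ = sin (π * ν / 2) / π * (π ^ (1 - ν) * (1 - ν) ^ (1 - ν) / (2 - ν) ^ (1 - ν) * T ^ (ν - 1)
        * (π * S / (2 - ν))) := by
          field_simp
    _ ≤ _ := mul_le_mul_of_nonneg_left key hfac.le
    _ = _ := by field_simp

/-! ### The quadrature weights -/

lemma integral_weight {a b ν : ℝ} (hν0 : 0 < ν) (c d : ℝ) :
    ∫ s in a..b, ((c - s) ^ (ν - 1) - (d - s) ^ (ν - 1)) / Gamma ν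
      = ((c - a) ^ ν - (c - b) ^ ν - (d - a) ^ ν + (d - b) ^ ν) / Gamma (1 + ν) := by
  have hi : ∀ x : ℝ, IntervalIntegrable (fun s => (x - s) ^ (ν - 1)) MeasureTheory.volume a b :=
    fun x => by
      have := (intervalIntegral.intervalIntegrable_rpow' (a := x - a) (b := x - b)
        (r := ν - 1) (by linarith)).comp_sub_left x
      simpa using this
  have hv : ∀ x : ℝ, ∫ s in a..b, (x - s) ^ (ν - 1) = ((x - a) ^ ν - (x - b) ^ ν) / ν := fun x => by
    rw [intervalIntegral.integral_comp_sub_left (fun u => u ^ (ν - 1)) x,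
      integral_rpow (Or.inl (by linarith)), sub_add_cancel]
  have hΓ : 0 < Gamma ν := Gamma_pos_of_pos hν0
  rw [intervalIntegral.integral_div, intervalIntegral.integral_sub (hi c) (hi d), hv, hv,
    add_comm 1 ν, Gamma_add_one hν0.ne']
  field_simp
  ring

/-- **Discrete lower bound (equation (12) of the paper).**
For every real sequence `V`, `Σ_{n=1}^N k_n (𝔅̄^n V) V^n ≥ ρ_ν T^{ν-1} Σ_{n=1}^N k_n (V^n)²`;
equivalently `Σ_n ( β_nn (V^n)² − Σ_{j<n} β_nj V^j V^n ) ≥ ρ_ν T^{ν-1} Σ_n k_n (V^n)²`. -/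
theorem discrete_lower_bound
    (T : ℝ) (hT : 0 < T) (N : ℕ) (hN : 1 ≤ N)
    (t : ℕ → ℝ) (ht0 : t 0 = 0) (htN : t N = T)
    (htmono : ∀ i, i < N → t i < t (i + 1))
    (ν : ℝ) (hν0 : 0 < ν) (hν1 : ν < 1)
    (k : ℕ → ℝ) (hk : ∀ n, k n = t n - t (n - 1))
    (β : ℕ → ℕ → ℝ)
    (hβdiag : ∀ n, 1 ≤ n → n ≤ N → β n n = k n ^ ν / Real.Gamma (1 + ν))
    (hβ : ∀ j n, 1 ≤ j → j < n → n ≤ N →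
      β n j = ∫ s in (t (j - 1))..(t j),
        ((t (n - 1) - s) ^ (ν - 1) - (t n - s) ^ (ν - 1)) / Real.Gamma ν)
    (ρ : ℝ)
    (hρ : ρ = π ^ (1 - ν) * ((1 - ν) ^ (1 - ν) / (2 - ν) ^ (2 - ν)) * Real.sin (π * ν / 2)) :
    ∀ V : ℕ → ℝ,
      (ρ * T ^ (ν - 1) * ∑ n ∈ Finset.Icc 1 N, k n * (V n) ^ 2
        ≤ ∑ n ∈ Finset.Icc 1 N,
            k n * ((k n)⁻¹ * (β n n * V n - ∑ j ∈ Finset.Icc 1 (n - 1), β n j * V j)) * V n)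
      ∧ (ρ * T ^ (ν - 1) * ∑ n ∈ Finset.Icc 1 N, k n * (V n) ^ 2
        ≤ ∑ n ∈ Finset.Icc 1 N,
            (β n n * (V n) ^ 2 - ∑ j ∈ Finset.Icc 1 (n - 1), β n j * V j * V n)) := by
  intro V
  have ht : ∀ n ∈ Finset.Icc 1 N, t (n - 1) < t n := fun n hn => by
    obtain ⟨hn1, hnN⟩ := Finset.mem_Icc.1 hn
    have := htmono (n - 1) (by omega)
    rwa [Nat.sub_add_cancel hn1] at this
  have hle : ∀ j n, j ≤ n → n ≤ N → t j ≤ t n := fun j n hjn => by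
    induction n, hjn using Nat.le_induction with
    | base => exact fun _ => le_rfl
    | succ n _ ih => exact fun h => (ih (by omega)).trans (htmono n (by omega)).le
  have hsum : ∑ n ∈ Finset.Icc 1 N, (t n - t (n - 1)) = T := by
    have : ∀ m, ∑ n ∈ Finset.Icc 1 m, (t n - t (n - 1)) = t m - t 0 := fun m => by
      induction m with
      | zero => simp
      | succ m ih => rw [Finset.sum_Icc_succ_top (by omega), ih, Nat.add_sub_cancel]; ring
    rw [this, htN, ht0, sub_zero]
  have hΓ : 0 < Gamma (1 + ν) := Gamma_pos_of_pos (by linarith)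
  have main := cellForm_lower_bound hν0 hν1 hT ht hle hsum V
  have hform : cellForm t V N (fun x => |x| ^ ν) / (2 * Gamma (1 + ν))
      = ∑ n ∈ Finset.Icc 1 N,
            (β n n * (V n) ^ 2 - ∑ j ∈ Finset.Icc 1 (n - 1), β n j * V j * V n) := by
    rw [cellForm_eq t V N (by simp), Finset.sum_div]
    refine Finset.sum_congr rfl fun n hn => ?_
    obtain ⟨hn1, hnN⟩ := Finset.mem_Icc.1 hn
    have hd : cellDiff t (fun x => |x| ^ ν) n n = 2 * Gamma (1 + ν) * β n n := by
      have := ht n hn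
      simp only [cellDiff, sub_self, abs_zero, zero_rpow hν0.ne']
      rw [abs_sub_comm (t (n - 1)), abs_of_pos (sub_pos.2 this), hβdiag n hn1 hnN, hk]
      field_simp
      ring
    have ho : ∀ j ∈ Finset.Icc 1 (n - 1),
        cellDiff t (fun x => |x| ^ ν) n j * (V n * V j) = -Gamma (1 + ν) * (β n j * V j * V n) := by
      intro j hj
      obtain ⟨hj1, hjn⟩ := Finset.mem_Icc.1 hj
      have h1 := hle j (n - 1) hjn (by omega)
      have h2 := hle (j - 1) j (by omega) (by omega)
      have h3 := hle (n - 1) n (by omega) hnN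
      simp only [cellDiff]
      rw [abs_of_nonneg (by linarith), abs_of_nonneg (by linarith), abs_of_nonneg (by linarith),
        abs_of_nonneg (by linarith), hβ j n hj1 (by omega) hnN, integral_weight hν0]
      field_simp
      ring
    rw [Finset.sum_congr rfl ho, ← Finset.mul_sum, hd]
    field_simp
    ring
  have second : ρ * T ^ (ν - 1) * ∑ n ∈ Finset.Icc 1 N, k n * (V n) ^ 2
        ≤ ∑ n ∈ Finset.Icc 1 N,
            (β n n * (V n) ^ 2 - ∑ j ∈ Finset.Icc 1 (n - 1), β n j * V j * V n) := by
    rw [← hform, hρ]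
    simp_rw [hk]
    exact main
  refine ⟨second.trans_eq (Finset.sum_congr rfl fun n hn => ?_), second⟩
  have hkn : k n ≠ 0 := by rw [hk]; exact (sub_pos.2 (ht n hn)).ne'
  rw [mul_inv_cancel_left₀ hkn, sub_mul, Finset.sum_mul]
  ring
end

section
/- For every 1 ≤ j ≤ N−1, Σ_{n=j+1}^N β_nj = ( k_j^ν − [ (T − t_{j-1})^ν − (T − t_j)^ν ] ) / Γ(ν+1), and in particular Σ_{n=j+1}^N β_nj ≤ k_j^ν / Γ(ν+1). -/
open Real

/-!
The weights telescope. Integrating the kernel exactly gives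
`∫ s in a..b, (x - s)^(ν-1) / Γ(ν) = ((x - a)^ν - (x - b)^ν) / Γ(ν+1)`
(`integral_abelKernel`), so with `[a, b] = [t_{j-1}, t_j]` each `β_nj` with `n > j` is the difference
of this quantity at `x = t_{n-1}` and at `x = t_n`. Summing over `j < n ≤ N` leaves only the
endpoints `x = t_j`, which contributes `k_j^ν / Γ(ν+1)`, and `x = t_N = T`. The inequality holds
because `x ↦ x^ν` is increasing on `[0, ∞)` and `t_{j-1} ≤ t_j ≤ T`.
-/

/-- No order relation between `a`, `b` and `x` is needed: the singularity at `s = x` is integrable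
since `ν - 1 > -1`. -/
lemma intervalIntegrable_abelKernel {ν : ℝ} (hν : 0 < ν) (a b x : ℝ) :
    IntervalIntegrable (fun s => (x - s) ^ (ν - 1)) MeasureTheory.volume a b := by
  have h := (intervalIntegral.intervalIntegrable_rpow' (a := x - a) (b := x - b)
    (r := ν - 1) (by linarith)).comp_sub_left x
  simpa using h

lemma integral_abelKernel {ν : ℝ} (hν : 0 < ν) (a b x : ℝ) :
    (∫ s in a..b, (x - s) ^ (ν - 1)) / Real.Gamma ν
      = ((x - a) ^ ν - (x - b) ^ ν) / Real.Gamma (ν + 1) := by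
  rw [intervalIntegral.integral_comp_sub_left (fun s => s ^ (ν - 1)),
    integral_rpow (Or.inl (by linarith)), Real.Gamma_add_one hν.ne', sub_add_cancel, div_div]

lemma integral_abelKernel_sub {ν : ℝ} (hν : 0 < ν) (a b x y : ℝ) :
    (∫ s in a..b, ((x - s) ^ (ν - 1) - (y - s) ^ (ν - 1)) / Real.Gamma ν)
      = ((x - a) ^ ν - (x - b) ^ ν) / Real.Gamma (ν + 1)
        - ((y - a) ^ ν - (y - b) ^ ν) / Real.Gamma (ν + 1) := by
  rw [intervalIntegral.integral_div, intervalIntegral.integral_sub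
    (intervalIntegrable_abelKernel hν a b x) (intervalIntegrable_abelKernel hν a b y), sub_div,
    integral_abelKernel hν, integral_abelKernel hν]

/-- **Column sums of the weights.**
For every `1 ≤ j ≤ N−1`,
`Σ_{n=j+1}^N β_nj = ( k_j^ν − [(T−t_{j-1})^ν − (T−t_j)^ν] ) / Γ(ν+1) ≤ k_j^ν / Γ(ν+1)`. -/
theorem beta_column_sum
    (T : ℝ) (hT : 0 < T) (N : ℕ) (hN : 1 ≤ N)
    (t : ℕ → ℝ) (ht0 : t 0 = 0) (htN : t N = T)
    (htmono : ∀ i, i < N → t i < t (i + 1))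
    (ν : ℝ) (hν0 : 0 < ν) (hν1 : ν < 1)
    (k : ℕ → ℝ) (hk : ∀ n, k n = t n - t (n - 1))
    (β : ℕ → ℕ → ℝ)
    (hβdiag : ∀ n, 1 ≤ n → n ≤ N → β n n = k n ^ ν / Real.Gamma (1 + ν))
    (hβ : ∀ j n, 1 ≤ j → j < n → n ≤ N →
      β n j = ∫ s in (t (j - 1))..(t j),
        ((t (n - 1) - s) ^ (ν - 1) - (t n - s) ^ (ν - 1)) / Real.Gamma ν) :
    ∀ j, 1 ≤ j → j ≤ N - 1 →
      (∑ n ∈ Finset.Icc (j + 1) N, β n j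
          = (k j ^ ν - ((T - t (j - 1)) ^ ν - (T - t j) ^ ν)) / Real.Gamma (ν + 1))
      ∧ (∑ n ∈ Finset.Icc (j + 1) N, β n j ≤ k j ^ ν / Real.Gamma (ν + 1)) := by
  intro j hj hjN
  have hle : ∀ m, j ≤ m → m ≤ N → t j ≤ t m := by
    intro m hm
    induction m, hm using Nat.le_induction with
    | base => intro _; exact le_rfl
    | succ m _ ih => intro h; exact (ih (by omega)).trans (htmono m (by omega)).le
  have htel : ∀ m, j ≤ m → m ≤ N → ∑ n ∈ Finset.Icc (j + 1) m, β n j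
      = ((t j - t (j - 1)) ^ ν - (t j - t j) ^ ν) / Real.Gamma (ν + 1)
        - ((t m - t (j - 1)) ^ ν - (t m - t j) ^ ν) / Real.Gamma (ν + 1) := by
    intro m hm
    induction m, hm using Nat.le_induction with
    | base => intro _; simp
    | succ m hm ih =>
      intro h
      rw [Finset.sum_Icc_succ_top (by omega), ih (by omega),
        hβ j (m + 1) hj (by omega) h, integral_abelKernel_sub hν0, Nat.add_sub_cancel]
      ring
  have heq : ∑ n ∈ Finset.Icc (j + 1) N, β n j
      = (k j ^ ν - ((T - t (j - 1)) ^ ν - (T - t j) ^ ν)) / Real.Gamma (ν + 1) := by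
    rw [htel N (by omega) le_rfl, hk, htN, sub_self, Real.zero_rpow hν0.ne']
    ring
  refine ⟨heq, ?_⟩
  rw [heq]
  have hΓ : 0 < Real.Gamma (ν + 1) := Real.Gamma_pos_of_pos (by linarith)
  have h1 : t j ≤ T := htN ▸ hle N (by omega) le_rfl
  have h2 : t (j - 1) < t j := by
    have h := htmono (j - 1) (by omega)
    rwa [Nat.sub_add_cancel hj] at h
  have h3 : (T - t j) ^ ν ≤ (T - t (j - 1)) ^ ν :=
    Real.rpow_le_rpow (by linarith) (by linarith) hν0.le
  gcongr
  linarith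
end

section
/- Fix δ > 0. Suppose the real numbers r_0 > 0 and η_0 ∈ (0,2) satisfy both (r_0 + 1)(η_0/2)^{r_0} = δ and η_0 = 2 exp( −(r_0 + 2)/(r_0 + 1) ) (equivalently η_0 = 2 (δ/(r_0+1))^{1/r_0}). Then for every pair of real numbers r > 0 and η ∈ (0,2) satisfying the constraint (r+1)(η/2)^r = δ, one has r_0/η_0 ≤ r/η; that is, the ratio r/η is minimized subject to the constraint (r+1)(η/2)^r = δ by the choice η = 2 exp(−(r+2)/(r+1)) = 2(δ/(r+1))^{1/r}. -/
/-!
Taking logarithms in the constraint gives `log (r + 1) + r * log (η / 2) = log δ`. Eliminating `η`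
and multiplying by `r`, the inequality `log (r₀ / η₀) ≤ log (r / η)` becomes `F r₀ ≤ F r` for
`F s = s * log s + log (s + 1) - (log r₀ + 1 + 1 / (r₀ + 1)) * s`. Here the formula for `η₀`
enters as `log (η₀ / 2) = -(1 + 1 / (r₀ + 1))`. The derivative
`F' s = (log s + 1 / (s + 1)) - (log r₀ + 1 / (r₀ + 1))` is increasing in `s > 0` and vanishes at
`r₀`, so `F` is minimal there.
-/

open Real

lemma log_add_inv_mono {s t : ℝ} (hs : 0 < s) (hst : s ≤ t) :
    log s + 1 / (s + 1) ≤ log t + 1 / (t + 1) := by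
  have ht : 0 < t := hs.trans_le hst
  have h1 : 1 - (t / s)⁻¹ ≤ log (t / s) := one_sub_inv_le_log_of_pos (by positivity)
  rw [log_div ht.ne' hs.ne'] at h1
  have h2 : 1 / (s + 1) - 1 / (t + 1) ≤ 1 - (t / s)⁻¹ := by
    have e : 1 - (t / s)⁻¹ - (1 / (s + 1) - 1 / (t + 1))
        = (t - s) * (s * t + s + 1) / (t * ((s + 1) * (t + 1))) := by
      field_simp
      ring
    have : 0 ≤ (t - s) * (s * t + s + 1) / (t * ((s + 1) * (t + 1))) := by
      have := sub_nonneg.2 hst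
      positivity
    linarith
  linarith

/-- The function `s * log s + log (s + 1)` lies above its tangent line at `a`, whose slope is
`log a + 1 + 1 / (a + 1)`. -/
lemma tangent_bound {a r : ℝ} (ha : 0 < a) (hr : 0 < r) :
    a * log a + log (a + 1) - (log a + 1 + 1 / (a + 1)) * a ≤
      r * log r + log (r + 1) - (log a + 1 + 1 / (a + 1)) * r := by
  set F : ℝ → ℝ := fun s => s * log s + log (s + 1) - (log a + 1 + 1 / (a + 1)) * s
  have hF : ∀ s, 0 < s →
      HasDerivAt F ((log s + 1 / (s + 1)) - (log a + 1 / (a + 1))) s := by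
    intro s hs
    have h1 := hasDerivAt_mul_log hs.ne'
    have h2 := ((hasDerivAt_id' s).add_const (1 : ℝ)).log (by positivity)
    have h3 := (hasDerivAt_id' s).const_mul (log a + 1 + 1 / (a + 1))
    refine HasDerivAt.congr_deriv (f := F) ((h1.add h2).sub h3) ?_
    ring
  have hmin : IsMinOn F (Set.Ioi 0) a := by
    apply isMinOn_Ioi_of_deriv (hF a ha).continuousAt
    · intro s hs
      exact (hF s hs.1).differentiableAt.differentiableWithinAt
    · intro s hs
      exact (hF s (ha.trans hs)).differentiableAt.differentiableWithinAt
    · intro s hs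
      rw [(hF s hs.1).deriv]
      linarith [log_add_inv_mono hs.1 hs.2.le]
    · intro s hs
      rw [(hF s (ha.trans hs)).deriv]
      linarith [log_add_inv_mono ha (le_of_lt hs)]
  exact hmin hr

/-- **Optimal choice of `η` (Proposition 1).**
For a given `δ > 0`, the ratio `r/η` is minimised subject to the constraint
`(r+1)(η/2)^r = δ` by choosing `η = 2 exp(−(r+2)/(r+1)) = 2(δ/(r+1))^{1/r}`. -/
theorem optimal_eta
    (δ : ℝ) (hδ : 0 < δ)
    (r₀ η₀ : ℝ) (hr₀ : 0 < r₀) (hη₀0 : 0 < η₀) (hη₀2 : η₀ < 2)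
    (hcon₀ : (r₀ + 1) * (η₀ / 2) ^ r₀ = δ)
    (hopt : η₀ = 2 * Real.exp (-(r₀ + 2) / (r₀ + 1))) :
    ∀ r η : ℝ, 0 < r → 0 < η → η < 2 →
      (r + 1) * (η / 2) ^ r = δ → r₀ / η₀ ≤ r / η := by
  intro r η hr hη _ hcon
  have hlog : ∀ r η : ℝ, 0 < r → 0 < η → (r + 1) * (η / 2) ^ r = δ →
      log (r + 1) + r * (log η - log 2) = log δ := by
    intro r η hr hη h
    rw [← h, log_mul (by positivity) (by positivity), log_rpow (by positivity),
      log_div hη.ne' two_ne_zero]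
  have h0 := hlog r₀ η₀ hr₀ hη₀0 hcon₀
  have h1 := hlog r η hr hη hcon
  have hη₀ : log η₀ = log 2 - (1 + 1 / (r₀ + 1)) := by
    rw [hopt, log_mul two_ne_zero (exp_pos _).ne', log_exp]
    field_simp
    ring
  rw [← log_le_log_iff (by positivity) (by positivity), log_div hr₀.ne' hη₀0.ne',
    log_div hr.ne' hη.ne']
  refine le_of_mul_le_mul_left ?_ hr
  have hT := tangent_bound hr₀ hr
  rw [hη₀] at h0 ⊢
  linarith
end
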